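/- Let N ≥ 1 be an integer, ω > 0, and 1 < p < p_max, and let u be a ground-state profile of (QLS). If v : ℝ^N → ℝ is smooth, with ∫_{ℝ^N}(v² + |∇v|²) dx < ∞, and satisfies L₊v = 0 pointwise on ℝ^N, then there exist real numbers c₁, …, c_N such that v = Σ_{l=1}^{N} c_l ∂_{x_l}u; that is, the real kernel of L₊ is spanned by the partial derivatives of u. -/

import Mathlib

open MeasureTheory Real Filter Topology

noncomputable section

/-- Partial derivative along the `i`-th coordinate direction. -/
def pd {N : ℕ} {F : Type*} [NormedAddCommGroup F] [NormedSpace ℝ F]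
    (i : Fin N) (f : EuclideanSpace ℝ (Fin N) → F) (x : EuclideanSpace ℝ (Fin N)) : F :=
  fderiv ℝ f x (EuclideanSpace.single i 1)

/-- Euclidean Laplacian. -/
def lap {N : ℕ} {F : Type*} [NormedAddCommGroup F] [NormedSpace ℝ F]
    (f : EuclideanSpace ℝ (Fin N) → F) (x : EuclideanSpace ℝ (Fin N)) : F :=
  ∑ i : Fin N, pd i (pd i f) x

/-- Squared norm of the gradient of a real-valued function: `|∇f|²`. -/
def gradsq {N : ℕ} (f : EuclideanSpace ℝ (Fin N) → ℝ) (x : EuclideanSpace ℝ (Fin N)) : ℝ :=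
  ∑ i : Fin N, (pd i f x) ^ 2

/-- A ground-state profile of the quasilinear Schrödinger equation (QLS)
`-Δu - uΔ(u²) + ωu - u^p = 0` on `ℝ^N`: smooth, positive, radially symmetric with a
strictly decreasing positive profile, solves (QLS) pointwise, and decays
exponentially together with all its derivatives. -/
structure IsGroundState (N : ℕ) (ω p : ℝ) (u : EuclideanSpace ℝ (Fin N) → ℝ) : Prop where
  smooth : ContDiff ℝ (⊤ : ℕ∞) u
  pos : ∀ x, 0 < u x
  radial : ∃ U : ℝ → ℝ, StrictAntiOn U (Set.Ici 0) ∧ (∀ r, 0 ≤ r → 0 < U r) ∧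
      ∀ x, u x = U ‖x‖
  solves : ∀ x, -lap u x - u x * lap (fun y => (u y) ^ 2) x + ω * u x - (u x) ^ p = 0
  decay : ∀ k : ℕ, ∃ C > 0, ∃ δ > 0, ∀ x,
      ‖iteratedFDeriv ℝ k u x‖ ≤ C * Real.exp (-δ * ‖x‖)

/-- The linearized operator `L₊` around `u` (real-valued functions). -/
def Lplus {N : ℕ} (ω p : ℝ) (u η : EuclideanSpace ℝ (Fin N) → ℝ)
    (x : EuclideanSpace ℝ (Fin N)) : ℝ :=
  -lap η x - 2 * u x * lap (fun y => u y * η y) x + ω * η x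
    - (lap (fun y => (u y) ^ 2) x + p * u x ^ (p - 1)) * η x

/-- The linearized operator `L₋` around `u`. -/
def Lminus {N : ℕ} (ω p : ℝ) (u ζ : EuclideanSpace ℝ (Fin N) → ℝ)
    (x : EuclideanSpace ℝ (Fin N)) : ℝ :=
  -lap ζ x + ω * ζ x - (lap (fun y => (u y) ^ 2) x + u x ^ (p - 1)) * ζ x

/-!
Write `w = H(u)` with `H' = √(1 + 2t²)`. This turns the quasilinear equation into `-Δw = f(w)`, and
conjugation by `√(1 + 2u²)` turns `L₊` into `-Δ - f'(w)`, whose kernel contains every `∂ₑw`. Let `Z`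
be in this kernel.

*Non-radial part.* The odd part of `Z` under the reflection in `e^⊥`, divided by `∂ₑw`, is a smooth
function `Q` with `div((∂ₑw)² ∇Q) = 0` and `(∂ₑw) Q` square integrable. A Caccioppoli estimate makes
`Q` constant. Applying this to all `e` shows that `Z - ∂_b w` is radial for some vector `b`.

*Radial part.* In dimension one the Wronskian of a radial kernel element with `w'` is constant and
integrable, hence zero. In dimension `N ≥ 2`, suppose that `z` is a radial kernel element with
`z(0) > 0`. Comparison with `w'` and with `rw'` shows that `z` has a first zero `ρ`, at which
`f(w) > 0`. The function `y = 2w + κrw'` satisfies `y'' + (N - 1)y'/r + f'(w)y = g` with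
`g = 2(f'(w)w - f(w)) - 2κf(w)`; choose `κ` such that `g(ρ) = 0`. As `f'(w)w/f(w)` decreases in `w`,
`g` is negative before `ρ` and positive after it. Hence `y(ρ) < 0` by comparison on `(0, ρ)`, and
`y < 0` beyond `ρ` because `rw'/w` decreases there, by Pohozaev's identity. Now the Wronskian of `z`
and `y` beyond `ρ` is negative and decreasing up to the next zero of `z`, where it would have to be
nonnegative, or up to infinity, where it would have to be integrable.
-/

/-! ### The dual change of variables -/

section DualVariable

/-- The weight `√(1 + 2t²)`, the derivative of the dual variable `dualMap`. -/
def dualWeight (t : ℝ) : ℝ := √(1 + 2 * t ^ 2)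

/-- The dual variable of Colin and Jeanjean, in closed form: the primitive of `dualWeight` that
vanishes at `0`. Composing with it turns the quasilinear equation into a semilinear one. -/
def dualMap (t : ℝ) : ℝ := t * dualWeight t / 2 + arsinh (√2 * t) / (2 * √2)

/-- The nonlinearity of the dual equation `-Δ(dualMap u) = dualForce ω p u`. Like all functions
below it is expressed in the original variable `t`, not in the dual variable `dualMap t`. -/
def dualForce (ω p t : ℝ) : ℝ := (t ^ p - ω * t) / dualWeight t

/-- The derivative of `dualForce` with respect to the dual variable: the potential of the
linearized dual equation. -/
def dualPotential (ω p t : ℝ) : ℝ :=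
  (p * t ^ (p - 1) - ω) / dualWeight t ^ 2 - (t ^ p - ω * t) * (2 * t) / dualWeight t ^ 4

/-- The primitive of `dualForce` with respect to the dual variable. -/
def dualEnergy (ω p t : ℝ) : ℝ := t ^ (p + 1) / (p + 1) - ω * t ^ 2 / 2

/-- The ratio `H / (t H')` for the dual variable `H`. -/
def dualRatio (t : ℝ) : ℝ := dualMap t / (t * dualWeight t)

/-- The excess `f'(w) w - f(w)` of the dual nonlinearity `f` over a linear one. -/
def dualExcess (ω p t : ℝ) : ℝ := dualPotential ω p t * dualMap t - dualForce ω p t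

/-- The integrand `M F(w) - (M - 2) / 2 * w f(w)` of the Pohozaev identity in dimension `M`, for
the dual nonlinearity `f` with primitive `F`. -/
def pohozaevDensity (M ω p t : ℝ) : ℝ :=
  M * dualEnergy ω p t - (M - 2) / 2 * (dualMap t * dualForce ω p t)

/-- The factor `(1 + 2t²) f'(w)` of the dual nonlinearity `f`, written in terms of `t ^ (p - 1)`. -/
def dualSlope (ω p t : ℝ) : ℝ :=
  p * t ^ (p - 1) - ω - (t ^ (p - 1) - ω) * (2 * t ^ 2 / (1 + 2 * t ^ 2))

lemma dualWeight_pos (t : ℝ) : 0 < dualWeight t := Real.sqrt_pos.2 (by positivity)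

lemma dualWeight_sq (t : ℝ) : dualWeight t ^ 2 = 1 + 2 * t ^ 2 := Real.sq_sqrt (by positivity)

lemma contDiff_dualWeight {n : WithTop ℕ∞} : ContDiff ℝ n dualWeight :=
  ContDiff.sqrt (by fun_prop) fun t => by positivity

lemma contDiff_dualMap {n : WithTop ℕ∞} : ContDiff ℝ n dualMap :=
  ((contDiff_id.mul contDiff_dualWeight).div_const 2).add
    ((Real.contDiff_arsinh.comp (contDiff_const.mul contDiff_id)).div_const _)

lemma hasDerivAt_dualWeight (t : ℝ) : HasDerivAt dualWeight (2 * t / dualWeight t) t := by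
  have hpoly : HasDerivAt (fun t : ℝ => 1 + 2 * t ^ 2) (4 * t) t :=
    (((hasDerivAt_pow 2 t).const_mul 2).const_add 1).congr_deriv (by ring)
  refine (hpoly.sqrt (by positivity)).congr_deriv ?_
  change 4 * t / (2 * dualWeight t) = _
  have := (dualWeight_pos t).ne'
  field_simp
  ring

lemma hasDerivAt_dualWeight_deriv (t : ℝ) :
    HasDerivAt (fun t => 2 * t / dualWeight t) (2 / dualWeight t ^ 3) t := by
  have hS := (dualWeight_pos t).ne'
  refine (((hasDerivAt_id t).const_mul 2).div (hasDerivAt_dualWeight t) hS).congr_deriv ?_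
  simp only [id]
  field_simp
  linear_combination dualWeight_sq t

lemma hasDerivAt_dualMap (t : ℝ) : HasDerivAt dualMap (dualWeight t) t := by
  have hprod := ((hasDerivAt_id t).mul (hasDerivAt_dualWeight t)).div_const 2
  have harsinh := ((hasDerivAt_id t).const_mul √2).arsinh.div_const (2 * √2)
  have hroot : √(1 + (√2 * id t) ^ 2) = dualWeight t := by
    rw [mul_pow, Real.sq_sqrt zero_le_two, dualWeight, id]
  refine (hprod.add harsinh).congr_deriv ?_
  rw [hroot]
  have hS := (dualWeight_pos t).ne'
  simp only [id, smul_eq_mul]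
  field_simp
  linear_combination -(dualWeight_sq t)

lemma dualMap_zero : dualMap 0 = 0 := by simp [dualMap]

lemma dualMap_strictMono : StrictMono dualMap :=
  strictMono_of_hasDerivAt_pos hasDerivAt_dualMap dualWeight_pos

lemma dualMap_pos {t : ℝ} (ht : 0 < t) : 0 < dualMap t :=
  dualMap_zero ▸ dualMap_strictMono ht

lemma dualMap_le {t : ℝ} (ht : 0 ≤ t) : dualMap t ≤ t * dualWeight t := by
  have hderiv (x : ℝ) : HasDerivAt (fun t => t * dualWeight t - dualMap t)
      (2 * x ^ 2 / dualWeight x) x :=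
    (((hasDerivAt_id x).mul (hasDerivAt_dualWeight x)).sub (hasDerivAt_dualMap x)).congr_deriv
      (by simp only [id]; ring)
  have hmono : Monotone fun t => t * dualWeight t - dualMap t :=
    monotone_of_hasDerivAt_nonneg hderiv fun x => by have := dualWeight_pos x; positivity
  simpa [dualMap_zero] using hmono ht

lemma mul_dualWeight_cube_le {t : ℝ} (ht : 0 ≤ t) :
    t * dualWeight t ^ 3 ≤ dualMap t * (1 + 4 * t ^ 2) := by
  have hderiv (x : ℝ) : HasDerivAt (fun t => dualMap t - t * dualWeight t ^ 3 / (1 + 4 * t ^ 2))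
      (dualWeight x * (4 * x ^ 2) / (1 + 4 * x ^ 2) ^ 2) x := by
    have hpoly : HasDerivAt (fun t : ℝ => 1 + 4 * t ^ 2) (8 * x) x :=
      (((hasDerivAt_pow 2 x).const_mul 4).const_add 1).congr_deriv (by ring)
    refine ((hasDerivAt_dualMap x).sub (((hasDerivAt_id x).mul
      ((hasDerivAt_dualWeight x).pow 3)).div hpoly (by positivity))).congr_deriv ?_
    have hS := (dualWeight_pos x).ne'
    have hcube : dualWeight x ^ 3 = dualWeight x * (1 + 2 * x ^ 2) := by
      rw [← dualWeight_sq]; ring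
    simp only [id, Pi.mul_apply, Pi.pow_apply, Nat.cast_ofNat, Nat.add_one_sub_one,
      hcube, dualWeight_sq]
    field_simp
    linear_combination (6 * x ^ 2 + 24 * x ^ 4) * dualWeight_sq x
  have hmono : Monotone fun t => dualMap t - t * dualWeight t ^ 3 / (1 + 4 * t ^ 2) :=
    monotone_of_hasDerivAt_nonneg hderiv fun x => by have := dualWeight_pos x; positivity
  have hzero : t * dualWeight t ^ 3 / (1 + 4 * t ^ 2) ≤ dualMap t := by
    simpa [dualMap_zero] using hmono ht
  rwa [div_le_iff₀ (by positivity)] at hzero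

lemma dualRatio_pos {t : ℝ} (ht : 0 < t) : 0 < dualRatio t :=
  div_pos (dualMap_pos ht) (mul_pos ht (dualWeight_pos t))

lemma dualRatio_le_one {t : ℝ} (ht : 0 < t) : dualRatio t ≤ 1 :=
  (div_le_one (mul_pos ht (dualWeight_pos t))).2 (dualMap_le ht.le)

lemma dualRatio_antitoneOn : AntitoneOn dualRatio (Set.Ioi 0) := by
  have hderiv (x : ℝ) (hx : 0 < x) : HasDerivAt dualRatio
      ((x * dualWeight x ^ 3 - dualMap x * (1 + 4 * x ^ 2)) / (x ^ 2 * dualWeight x ^ 3)) x := by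
    have hS := (dualWeight_pos x).ne'
    refine ((hasDerivAt_dualMap x).div ((hasDerivAt_id x).mul (hasDerivAt_dualWeight x))
      (mul_ne_zero hx.ne' hS)).congr_deriv ?_
    simp only [id, Pi.mul_apply]
    field_simp
    rw [dualWeight_sq]
    ring
  refine antitoneOn_of_hasDerivWithinAt_nonpos (convex_Ioi 0)
    (fun x hx => (hderiv x hx).continuousAt.continuousWithinAt)
    (fun x hx => (hderiv x (interior_subset hx)).hasDerivWithinAt) fun x hx => ?_
  have hx : 0 < x := interior_subset hx
  have := dualWeight_pos x
  exact div_nonpos_of_nonpos_of_nonneg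
    (sub_nonpos.2 (mul_dualWeight_cube_le hx.le)) (by positivity)

variable {ω p t : ℝ}

lemma rpow_eq_rpow_sub_one_mul (p : ℝ) (ht : 0 < t) : t ^ p = t ^ (p - 1) * t := by
  rw [← Real.rpow_add_one ht.ne', sub_add_cancel]

lemma hasDerivAt_dualForce (ω p : ℝ) (ht : 0 < t) :
    HasDerivAt (dualForce ω p) (dualPotential ω p t * dualWeight t) t := by
  have hnum : HasDerivAt (fun t : ℝ => t ^ p - ω * t) (p * t ^ (p - 1) - ω) t :=
    ((Real.hasDerivAt_rpow_const (Or.inl ht.ne')).sub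
      ((hasDerivAt_id t).const_mul ω)).congr_deriv (by rw [mul_one])
  have hS := (dualWeight_pos t).ne'
  refine (hnum.div (hasDerivAt_dualWeight t) hS).congr_deriv ?_
  rw [dualPotential]
  field_simp

lemma hasDerivAt_dualEnergy (ω : ℝ) (hp : p + 1 ≠ 0) (ht : 0 < t) :
    HasDerivAt (dualEnergy ω p) (dualForce ω p t * dualWeight t) t := by
  refine (((Real.hasDerivAt_rpow_const (Or.inl ht.ne')).div_const (p + 1)).sub
    (((hasDerivAt_pow 2 t).const_mul ω).div_const 2)).congr_deriv ?_
  have hS := (dualWeight_pos t).ne'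
  rw [dualForce, add_sub_cancel_right]
  field_simp
  norm_num
  ring

lemma continuous_dualPotential (ω : ℝ) (hp : 1 ≤ p) : Continuous (dualPotential ω p) := by
  have hS : Continuous dualWeight := contDiff_dualWeight.continuous (n := 0)
  have hpow (q : ℝ) (hq : 0 ≤ q) : Continuous fun t : ℝ => t ^ q :=
    Real.continuous_rpow_const hq
  have hpow₀ := hpow p (by linarith)
  have hpow₁ := hpow (p - 1) (by linarith)
  unfold dualPotential
  exact (by fun_prop : Continuous fun t => p * t ^ (p - 1) - ω).div (hS.pow 2)
    (fun t => pow_ne_zero 2 (dualWeight_pos t).ne') |>.sub <|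
      (by fun_prop : Continuous fun t => (t ^ p - ω * t) * (2 * t)).div (hS.pow 4)
        fun t => pow_ne_zero 4 (dualWeight_pos t).ne'

lemma dualForce_eq (ω p : ℝ) (ht : 0 < t) :
    dualForce ω p t = (t / dualWeight t) * (t ^ (p - 1) - ω) := by
  rw [dualForce, rpow_eq_rpow_sub_one_mul p ht]; ring

lemma dualForce_pos_iff (ht : 0 < t) : 0 < dualForce ω p t ↔ ω < t ^ (p - 1) := by
  rw [dualForce_eq ω p ht, mul_pos_iff_of_pos_left (div_pos ht (dualWeight_pos t)), sub_pos]

lemma dualForce_neg_iff (ht : 0 < t) : dualForce ω p t < 0 ↔ t ^ (p - 1) < ω := by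
  rw [dualForce_eq ω p ht, ← smul_eq_mul,
    smul_neg_iff_of_pos_left (div_pos ht (dualWeight_pos t)), sub_neg]

lemma dualExcess_eq (ω p : ℝ) (ht : 0 < t) : dualExcess ω p t =
    (t / dualWeight t) * (dualRatio t * dualSlope ω p t - (t ^ (p - 1) - ω)) := by
  have hS := (dualWeight_pos t).ne'
  rw [dualExcess, dualPotential, dualForce, dualRatio, dualSlope, rpow_eq_rpow_sub_one_mul p ht,
    ← dualWeight_sq]
  field_simp

lemma dualExcess_pos (hp : 1 < p) (ht : 0 < t) (hle : t ^ (p - 1) ≤ ω) :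
    0 < dualExcess ω p t := by
  have hsplit : dualRatio t * dualSlope ω p t - (t ^ (p - 1) - ω) =
      dualRatio t * ((p - 1) * t ^ (p - 1) + (ω - t ^ (p - 1)) * (2 * t ^ 2 / (1 + 2 * t ^ 2)))
        + (ω - t ^ (p - 1)) * (1 - dualRatio t) := by
    rw [dualSlope]; ring
  rw [dualExcess_eq ω p ht, hsplit]
  have := dualWeight_pos t
  have := dualRatio_pos ht
  have := sub_nonneg.2 (dualRatio_le_one ht)
  have := sub_pos.2 hp
  have := sub_nonneg.2 hle
  positivity

lemma dualSlope_pos (hp : 1 < p) (hω : 0 < ω) (hlt : ω < t ^ (p - 1)) :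
    0 < dualSlope ω p t := by
  have hfrac : 2 * t ^ 2 / (1 + 2 * t ^ 2) ≤ 1 := (div_le_one (by positivity)).2 (by linarith)
  have hcut : (t ^ (p - 1) - ω) * (2 * t ^ 2 / (1 + 2 * t ^ 2)) ≤ t ^ (p - 1) - ω :=
    mul_le_of_le_one_right (sub_nonneg.2 hlt.le) hfrac
  have hgrow : t ^ (p - 1) < p * t ^ (p - 1) := lt_mul_of_one_lt_left (hω.trans hlt) hp
  rw [dualSlope]
  linarith

variable {t₀ t₁ : ℝ}

lemma dualSlope_mul_lt (hω : 0 < ω) (hp : 1 < p) (ht₀ : 0 < t₀) (hlt : ω < t₀ ^ (p - 1))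
    (h01 : t₀ < t₁) :
    dualSlope ω p t₁ * (t₀ ^ (p - 1) - ω) < dualSlope ω p t₀ * (t₁ ^ (p - 1) - ω) := by
  have hpow : t₀ ^ (p - 1) < t₁ ^ (p - 1) := Real.rpow_lt_rpow ht₀.le h01 (sub_pos.2 hp)
  have hfrac : 2 * t₀ ^ 2 / (1 + 2 * t₀ ^ 2) ≤ 2 * t₁ ^ 2 / (1 + 2 * t₁ ^ 2) := by
    rw [div_le_div_iff₀ (by positivity) (by positivity)]
    nlinarith [mul_pos ht₀ (ht₀.trans h01)]
  have hmain : 0 < (p - 1) * ω * (t₁ ^ (p - 1) - t₀ ^ (p - 1)) :=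
    mul_pos (mul_pos (sub_pos.2 hp) hω) (sub_pos.2 hpow)
  have hrest : 0 ≤ (t₁ ^ (p - 1) - ω) * (t₀ ^ (p - 1) - ω) *
      (2 * t₁ ^ 2 / (1 + 2 * t₁ ^ 2) - 2 * t₀ ^ 2 / (1 + 2 * t₀ ^ 2)) :=
    mul_nonneg (mul_nonneg (by linarith) (by linarith)) (sub_nonneg.2 hfrac)
  simp only [dualSlope]
  linear_combination hmain + hrest

-- Equivalently, `f'(w) w / f(w)` decreases strictly in `w` where `f` is positive.
lemma dualExcess_mul_dualForce_lt (hω : 0 < ω) (hp : 1 < p) (ht₀ : 0 < t₀)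
    (hlt : ω < t₀ ^ (p - 1)) (h01 : t₀ < t₁) :
    dualExcess ω p t₁ * dualForce ω p t₀ < dualExcess ω p t₀ * dualForce ω p t₁ := by
  have ht₁ : 0 < t₁ := ht₀.trans h01
  have hpow : t₀ ^ (p - 1) < t₁ ^ (p - 1) := Real.rpow_lt_rpow ht₀.le h01 (sub_pos.2 hp)
  have hratio := dualRatio_antitoneOn (Set.mem_Ioi.2 ht₀) (Set.mem_Ioi.2 ht₁) h01.le
  have hkey : dualRatio t₁ * (dualSlope ω p t₁ * (t₀ ^ (p - 1) - ω)) <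
      dualRatio t₀ * (dualSlope ω p t₀ * (t₁ ^ (p - 1) - ω)) :=
    calc _ < dualRatio t₁ * (dualSlope ω p t₀ * (t₁ ^ (p - 1) - ω)) :=
          mul_lt_mul_of_pos_left (dualSlope_mul_lt hω hp ht₀ hlt h01) (dualRatio_pos ht₁)
      _ ≤ _ := mul_le_mul_of_nonneg_right hratio
          (mul_nonneg (dualSlope_pos hp hω hlt).le (by linarith))
  have hfactor : 0 < (t₀ / dualWeight t₀) * (t₁ / dualWeight t₁) :=
    mul_pos (div_pos ht₀ (dualWeight_pos t₀)) (div_pos ht₁ (dualWeight_pos t₁))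
  rw [dualExcess_eq ω p ht₀, dualExcess_eq ω p ht₁, dualForce_eq ω p ht₀, dualForce_eq ω p ht₁]
  linear_combination mul_lt_mul_of_pos_left hkey hfactor

lemma pohozaevDensity_eq (M ω : ℝ) (hp : 1 < p) (ht : 0 < t) : pohozaevDensity M ω p t =
    t ^ 2 * ((M / (p + 1) - (M - 2) / 2 * dualRatio t) * (t ^ (p - 1) - ω)
      - ω * (M / 2 - M / (p + 1))) := by
  have hS := (dualWeight_pos t).ne'
  have hp' : p + 1 ≠ 0 := by linarith
  have hpow : t ^ (p + 1) = t ^ (p - 1) * t ^ 2 := by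
    rw [Real.rpow_add_one ht.ne', rpow_eq_rpow_sub_one_mul p ht]; ring
  rw [pohozaevDensity, dualEnergy, dualForce_eq ω p ht, dualRatio, hpow]
  field_simp
  ring

/- Write `pohozaevDensity M ω p t = t² (X (t ^ (p - 1) - ω) - ω d)` with `d > 0`. If it is
nonnegative, then `X` and `t ^ (p - 1) - ω` are both positive, and both increase with `t`. -/
lemma pohozaevDensity_nonneg_of_le {M : ℝ} (hM : 2 ≤ M) (hω : 0 < ω) (hp : 1 < p) (ht₀ : 0 < t₀)
    (h01 : t₀ ≤ t₁) (h : 0 ≤ pohozaevDensity M ω p t₀) : 0 ≤ pohozaevDensity M ω p t₁ := by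
  have ht₁ : 0 < t₁ := ht₀.trans_le h01
  rw [pohozaevDensity_eq M ω hp ht₀] at h
  rw [pohozaevDensity_eq M ω hp ht₁]
  replace h := nonneg_of_mul_nonneg_right h (pow_pos ht₀ 2)
  refine mul_nonneg (sq_nonneg t₁) ?_
  have hpow : t₀ ^ (p - 1) ≤ t₁ ^ (p - 1) := Real.rpow_le_rpow ht₀.le h01 (by linarith)
  have hpos : 0 < t₀ ^ (p - 1) := Real.rpow_pos_of_pos ht₀ _
  have hd : 0 < M / 2 - M / (p + 1) :=
    sub_pos.2 (div_lt_div_of_pos_left (by linarith) zero_lt_two (by linarith))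
  have hX : M / (p + 1) - (M - 2) / 2 * dualRatio t₀ ≤
      M / (p + 1) - (M - 2) / 2 * dualRatio t₁ :=
    sub_le_sub_left (mul_le_mul_of_nonneg_left
      (dualRatio_antitoneOn (Set.mem_Ioi.2 ht₀) (Set.mem_Ioi.2 ht₁) h01) (by linarith)) _
  have hXd : -(M / (p + 1) - (M - 2) / 2 * dualRatio t₀) ≤ M / 2 - M / (p + 1) := by
    have := mul_le_mul_of_nonneg_left (dualRatio_le_one ht₀) (by linarith : 0 ≤ (M - 2) / 2)
    linarith
  set X₀ := M / (p + 1) - (M - 2) / 2 * dualRatio t₀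
  set d := M / 2 - M / (p + 1)
  have hforce : ω < t₀ ^ (p - 1) := by
    by_contra! hle
    nlinarith [mul_le_mul_of_nonneg_right hXd (sub_nonneg.2 hle), mul_pos hd hpos]
  have hX₀ : 0 < X₀ := by
    by_contra! hle
    nlinarith [mul_pos hω hd, mul_nonneg (neg_nonneg.2 hle) (sub_pos.2 hforce).le]
  have := mul_le_mul hX (sub_le_sub_right hpow ω) (by linarith) (by linarith)
  linarith

end DualVariable

/-! ### Exponential decay -/

/-- The function `f` decays exponentially at infinity, with some rate. -/
def ExpDecay {E F : Type*} [Norm E] [Norm F] (f : E → F) : Prop :=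
  ∃ C δ : ℝ, 0 < δ ∧ ∀ x, ‖f x‖ ≤ C * exp (-δ * ‖x‖)

namespace ExpDecay

section

variable {E F F' : Type*} [SeminormedAddCommGroup E] [SeminormedAddCommGroup F]
  [SeminormedAddCommGroup F'] {f g : E → F}

lemma of_norm_le (hf : ExpDecay f) {h : E → F'} (K : ℝ) (hle : ∀ x, ‖h x‖ ≤ K * ‖f x‖) :
    ExpDecay h := by
  obtain ⟨C, δ, hδ, hC⟩ := hf
  refine ⟨|K| * C, δ, hδ, fun x => ?_⟩
  calc ‖h x‖ ≤ |K| * ‖f x‖ := (hle x).trans (by gcongr; exact le_abs_self K)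
    _ ≤ |K| * C * exp (-δ * ‖x‖) := by rw [mul_assoc]; gcongr; exact hC x

lemma exists_norm_le (hf : ExpDecay f) : ∃ K, ∀ x, ‖f x‖ ≤ K := by
  obtain ⟨C, δ, hδ, hC⟩ := hf
  refine ⟨|C|, fun x => (hC x).trans ?_⟩
  have hexp : exp (-δ * ‖x‖) ≤ 1 := Real.exp_le_one_iff.2 (by nlinarith [norm_nonneg x])
  calc C * exp (-δ * ‖x‖) ≤ |C| * 1 := by gcongr; exact le_abs_self C
    _ = |C| := mul_one _

lemma add (hf : ExpDecay f) (hg : ExpDecay g) : ExpDecay fun x => f x + g x := by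
  obtain ⟨C, δ, hδ, hC⟩ := hf
  obtain ⟨C', δ', hδ', hC'⟩ := hg
  refine ⟨|C| + |C'|, min δ δ', lt_min hδ hδ', fun x => (norm_add_le _ _).trans ?_⟩
  rw [add_mul]
  refine add_le_add ((hC x).trans ?_) ((hC' x).trans ?_)
  · gcongr
    exacts [le_abs_self C, min_le_left _ _]
  · gcongr
    exacts [le_abs_self C', min_le_right _ _]

lemma neg (hf : ExpDecay f) : ExpDecay fun x => -f x :=
  hf.of_norm_le 1 fun x => by rw [norm_neg, one_mul]

lemma sub (hf : ExpDecay f) (hg : ExpDecay g) : ExpDecay fun x => f x - g x := by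
  simpa only [sub_eq_add_neg] using hf.add hg.neg

lemma comp_of_norm_eq {E' : Type*} [SeminormedAddCommGroup E'] {m : E' → E} (hf : ExpDecay f)
    (hm : ∀ x, ‖m x‖ = ‖x‖) : ExpDecay fun x => f (m x) := by
  obtain ⟨C, δ, hδ, hC⟩ := hf
  exact ⟨C, δ, hδ, fun x => hm x ▸ hC (m x)⟩

end

section Real

variable {E : Type*} [SeminormedAddCommGroup E] {f g : E → ℝ}

lemma mul_of_norm_le (hf : ExpDecay f) {K : ℝ} (hg : ∀ x, ‖g x‖ ≤ K) :
    ExpDecay fun x => g x * f x :=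
  hf.of_norm_le K fun x => by rw [norm_mul]; gcongr; exact hg x

lemma const_mul (hf : ExpDecay f) (c : ℝ) : ExpDecay fun x => c * f x :=
  hf.mul_of_norm_le fun _ => le_rfl

lemma mul (hf : ExpDecay f) (hg : ExpDecay g) : ExpDecay fun x => f x * g x :=
  let ⟨_, hK⟩ := hf.exists_norm_le
  hg.mul_of_norm_le hK

lemma sq (hf : ExpDecay f) : ExpDecay fun x => f x ^ 2 := by
  simpa only [pow_two] using hf.mul hf

lemma norm_mul (hf : ExpDecay f) : ExpDecay fun x => ‖x‖ * f x := by
  obtain ⟨C, δ, hδ, hC⟩ := hf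
  refine ⟨C * (2 / δ), δ / 2, by positivity, fun x => ?_⟩
  have : 0 ≤ C := nonneg_of_mul_nonneg_left ((norm_nonneg _).trans (hC x)) (exp_pos _)
  have hlin : ‖x‖ ≤ 2 / δ * exp (δ / 2 * ‖x‖) :=
    calc ‖x‖ = 2 / δ * (δ / 2 * ‖x‖) := by field_simp
      _ ≤ 2 / δ * exp (δ / 2 * ‖x‖) := by
        gcongr
        linarith [Real.add_one_le_exp (δ / 2 * ‖x‖)]
  have hexp : exp (δ / 2 * ‖x‖) * exp (-δ * ‖x‖) = exp (-(δ / 2) * ‖x‖) := by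
    rw [← Real.exp_add]; ring_nf
  calc ‖‖x‖ * f x‖ = ‖x‖ * ‖f x‖ := by rw [_root_.norm_mul, norm_norm]
    _ ≤ 2 / δ * exp (δ / 2 * ‖x‖) * (C * exp (-δ * ‖x‖)) := by gcongr; exact hC x
    _ = C * (2 / δ) * exp (-(δ / 2) * ‖x‖) := by rw [← hexp]; ring

lemma norm_pow_mul (hf : ExpDecay f) (k : ℕ) : ExpDecay fun x => ‖x‖ ^ k * f x := by
  induction k with
  | zero => simpa using hf
  | succ k ih => simpa only [pow_succ', mul_assoc] using ih.norm_mul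

lemma one_add_norm_pow_mul (hf : ExpDecay f) (k : ℕ) : ExpDecay fun x => (1 + ‖x‖) ^ k * f x := by
  induction k with
  | zero => simpa using hf
  | succ k ih => simpa only [pow_succ', mul_assoc, add_mul, one_mul] using ih.add ih.norm_mul

lemma pow_mul {f : ℝ → ℝ} (hf : ExpDecay f) (k : ℕ) : ExpDecay fun r => r ^ k * f r :=
  (hf.norm_pow_mul k).of_norm_le 1 fun r => by simp

lemma id_mul {f : ℝ → ℝ} (hf : ExpDecay f) : ExpDecay fun r => r * f r := by
  simpa using hf.pow_mul 1

lemma tendsto_atTop {f : ℝ → ℝ} (hf : ExpDecay f) : Tendsto f atTop (𝓝 0) := by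
  obtain ⟨C, δ, hδ, hC⟩ := hf
  have hexp : Tendsto (fun r : ℝ => exp (-δ * r)) atTop (𝓝 0) :=
    Real.tendsto_exp_atBot.comp (tendsto_id.const_mul_atTop_of_neg (neg_lt_zero.2 hδ))
  refine squeeze_zero_norm' ?_ (by simpa using hexp.const_mul C)
  filter_upwards [eventually_ge_atTop 0] with r hr
  simpa [abs_of_nonneg hr] using hC r

end Real

lemma integrable {E : Type*} [NormedAddCommGroup E] [NormedSpace ℝ E] [FiniteDimensional ℝ E]
    [MeasurableSpace E] [BorelSpace E] {μ : Measure E} [μ.IsAddHaarMeasure] {f : E → ℝ}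
    (hf : ExpDecay f) (hcont : Continuous f) : Integrable f μ := by
  set k := Module.finrank ℝ E + 1
  obtain ⟨K, hK⟩ := (hf.one_add_norm_pow_mul k).exists_norm_le
  have hbracket : Integrable (fun x : E => K * (1 + ‖x‖) ^ (-(k : ℝ))) μ :=
    (integrable_one_add_norm (by simp [k])).const_mul K
  refine hbracket.mono' hcont.aestronglyMeasurable (.of_forall fun x => ?_)
  have hpos : 0 < 1 + ‖x‖ := by positivity
  have hKx := hK x
  rw [_root_.norm_mul, norm_pow, Real.norm_of_nonneg hpos.le] at hKx
  rw [Real.rpow_neg hpos.le, Real.rpow_natCast, ← div_eq_mul_inv, le_div_iff₀ (by positivity)]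
  linarith

end ExpDecay

/-! ### Radial second-order equations -/

section RadialODE

/-- `θ` solves the inhomogeneous radial equation `θ'' + (n / r) θ' + V θ = φ` on `(0, ∞)`; the
derivative `θ'` is part of the data. For `n = N - 1` the left-hand side is `Δ + V` on radial
functions of `N` variables. -/
def SolvesRadialODE (n : ℕ) (V φ θ θ' : ℝ → ℝ) : Prop :=
  ∀ r, 0 < r → HasDerivAt θ (θ' r) r ∧ HasDerivAt θ' (φ r - n / r * θ' r - V r * θ r) r

/-- The Wronskian of `z` and `θ`, weighted by the radial density `r ^ n`. -/
def radialWronskian (n : ℕ) (z z' θ θ' : ℝ → ℝ) (r : ℝ) : ℝ := r ^ n * (z r * θ' r - z' r * θ r)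

/-- An exponentially decaying solution of an inhomogeneous radial equation, to be used as a
comparison function for solutions of the homogeneous one. -/
structure IsRadialTest (n : ℕ) (V φ θ θ' : ℝ → ℝ) : Prop where
  solves : SolvesRadialODE n V φ θ θ'
  continuous : Continuous θ
  continuous_deriv : Continuous θ'
  decay_deriv : ExpDecay θ'
  decay : ExpDecay θ

/-- A regular solution of the homogeneous radial equation with finite energy. -/
structure IsRadialKernel (n : ℕ) (V z z' : ℝ → ℝ) : Prop where
  solves : SolvesRadialODE n V 0 z z'
  continuous : Continuous z
  continuous_deriv : Continuous z'
  deriv_zero : z' 0 = 0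
  integrable : IntegrableOn (fun r => r ^ n * (z r ^ 2 + z' r ^ 2)) (Set.Ioi 0)

/-- `ρ` is the first positive zero of the function `z`, which starts positive. -/
structure IsFirstZero (z : ℝ → ℝ) (ρ : ℝ) : Prop where
  pos : 0 < ρ
  eq_zero : z ρ = 0
  pos_of_lt : ∀ r, 0 ≤ r → r < ρ → 0 < z r

variable {n : ℕ} {V φ φ₁ θ θ' θ₁ θ₁' z z' : ℝ → ℝ}

lemma IsRadialTest.linear_comb (h : IsRadialTest n V φ θ θ') (h₁ : IsRadialTest n V φ₁ θ₁ θ₁')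
    (a b : ℝ) : IsRadialTest n V (fun r => a * φ r + b * φ₁ r) (fun r => a * θ r + b * θ₁ r)
      (fun r => a * θ' r + b * θ₁' r) where
  solves r hr := by
    obtain ⟨hθ, hθ'⟩ := h.solves r hr
    obtain ⟨hθ₁, hθ₁'⟩ := h₁.solves r hr
    exact ⟨(hθ.const_mul a).add (hθ₁.const_mul b),
      ((hθ'.const_mul a).add (hθ₁'.const_mul b)).congr_deriv (by ring)⟩
  continuous := (h.continuous.const_mul a).add (h₁.continuous.const_mul b)
  continuous_deriv := (h.continuous_deriv.const_mul a).add (h₁.continuous_deriv.const_mul b)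
  decay := (h.decay.const_mul a).add (h₁.decay.const_mul b)
  decay_deriv := (h.decay_deriv.const_mul a).add (h₁.decay_deriv.const_mul b)

lemma SolvesRadialODE.hasDerivAt_radialWronskian (hz : SolvesRadialODE n V 0 z z')
    (hθ : SolvesRadialODE n V φ θ θ') {r : ℝ} (hr : 0 < r) :
    HasDerivAt (radialWronskian n z z' θ θ') (r ^ n * (z r * φ r)) r := by
  obtain ⟨hz₁, hz₂⟩ := hz r hr
  obtain ⟨hθ₁, hθ₂⟩ := hθ r hr
  refine ((hasDerivAt_pow n r).mul ((hz₁.mul hθ₂).sub (hz₂.mul hθ₁))).congr_deriv ?_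
  have hpow : (n : ℝ) * r ^ (n - 1) = n / r * r ^ n := by
    cases n with
    | zero => simp
    | succ k => rw [Nat.add_sub_cancel, pow_succ]; field_simp
  simp only [Pi.sub_apply, Pi.mul_apply, Pi.zero_apply, hpow]
  ring

lemma SolvesRadialODE.eq_zero (hz : SolvesRadialODE n V 0 z z') (hcont : Continuous z)
    (hcont' : Continuous z') {M : ℝ} (hV : ∀ r, 0 < r → |V r| ≤ M) (h₀ : z 0 = 0) (h₀' : z' 0 = 0)
    {r : ℝ} (hr : 0 ≤ r) : z r = 0 := by
  set Q : ℝ → ℝ := fun r => (z r ^ 2 + z' r ^ 2) * exp (-(1 + M) * r) with hQ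
  have hderiv : ∀ r, 0 < r → HasDerivAt Q ((2 * (1 - V r) * (z r * z' r) - 2 * n / r * z' r ^ 2
      - (1 + M) * (z r ^ 2 + z' r ^ 2)) * exp (-(1 + M) * r)) r := fun r hr => by
    obtain ⟨hz₁, hz₂⟩ := hz r hr
    have hexp := ((hasDerivAt_id r).const_mul (-(1 + M))).exp
    refine (((hz₁.pow 2).add (hz₂.pow 2)).mul hexp).congr_deriv ?_
    simp only [Pi.add_apply, Pi.pow_apply, Pi.zero_apply, id]
    push_cast
    ring
  have hsign : ∀ r, 0 < r → 2 * (1 - V r) * (z r * z' r) - 2 * n / r * z' r ^ 2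
      - (1 + M) * (z r ^ 2 + z' r ^ 2) ≤ 0 := fun r hr => by
    have hdamping : 0 ≤ 2 * n / r * z' r ^ 2 := by positivity
    have hVr := abs_le.1 (hV r hr)
    nlinarith [mul_nonneg (sub_nonneg.2 hVr.2) (sq_nonneg (z r - z' r)),
      mul_nonneg (neg_le_iff_add_nonneg'.1 hVr.1) (sq_nonneg (z r + z' r)),
      sq_nonneg (z r - z' r)]
  have hanti : AntitoneOn Q (Set.Ici 0) := by
    refine antitoneOn_of_hasDerivWithinAt_nonpos (convex_Ici 0) (by fun_prop)
      (fun r hr => (hderiv r (by simpa using hr)).hasDerivWithinAt) fun r hr => ?_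
    exact mul_nonpos_of_nonpos_of_nonneg (hsign r (by simpa using hr)) (exp_pos _).le
  have hle : Q r ≤ 0 := by
    simpa [hQ, h₀, h₀'] using hanti Set.self_mem_Ici (Set.mem_Ici.2 hr) hr
  have hsum : z r ^ 2 + z' r ^ 2 ≤ 0 := nonpos_of_mul_nonpos_left hle (exp_pos _)
  exact pow_eq_zero_iff two_ne_zero |>.1 (by nlinarith [sq_nonneg (z r), sq_nonneg (z' r)])

lemma not_integrableOn_of_strictAntiOn {f : ℝ → ℝ} {a : ℝ} (hf : StrictAntiOn f (Set.Ici a))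
    (ha : f a ≤ 0) : ¬IntegrableOn f (Set.Ioi a) := by
  intro hint
  have hneg : f (a + 1) < 0 :=
    (hf Set.self_mem_Ici (Set.mem_Ici.2 (by linarith)) (lt_add_one a)).trans_le ha
  have hconst : IntegrableOn (fun _ => f (a + 1)) (Set.Ioi (a + 1)) := by
    refine Integrable.mono (hint.mono_set (Set.Ioi_subset_Ioi (by linarith)))
      aestronglyMeasurable_const ((ae_restrict_iff' measurableSet_Ioi).2 (.of_forall ?_))
    intro r hr
    have hlt := hf (Set.mem_Ici.2 (by linarith)) (Set.mem_Ici.2 (by linarith [hr.out])) hr.out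
    rw [Real.norm_of_nonpos hneg.le, Real.norm_of_nonpos (hlt.trans hneg).le]
    linarith
  rcases (integrableOn_const_iff (by finiteness)).1 hconst with hzero | hfin
  · exact hneg.ne (by simpa using hzero)
  · simp at hfin

lemma exists_first_zero {f : ℝ → ℝ} (hf : Continuous f) {a b : ℝ} (hab : a ≤ b) (ha : 0 < f a)
    (hb : f b ≤ 0) : ∃ c, a < c ∧ f c = 0 ∧ ∀ r, a ≤ r → r < c → 0 < f r := by
  set s := {r | a ≤ r ∧ f r ≤ 0}
  have hclosed : IsClosed s :=
    (isClosed_le continuous_const continuous_id).inter (isClosed_le hf continuous_const)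
  have hbdd : BddBelow s := ⟨a, fun _ hr => hr.1⟩
  obtain ⟨hac, hfc⟩ := hclosed.csInf_mem ⟨b, hab, hb⟩ hbdd
  have hpos : ∀ r, a ≤ r → r < sInf s → 0 < f r := fun r har hr =>
    not_le.1 fun hle => hr.not_ge (csInf_le hbdd ⟨har, hle⟩)
  have hlt : a < sInf s := hac.lt_of_ne fun heq => absurd (heq ▸ hfc) (not_le.2 ha)
  refine ⟨sInf s, hlt, le_antisymm hfc ?_, hpos⟩
  have hlim : Tendsto f (𝓝[<] sInf s) (𝓝 (f (sInf s))) := hf.continuousWithinAt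
  refine ge_of_tendsto hlim ?_
  filter_upwards [Ioo_mem_nhdsLT hlt] with r hr
  exact (hpos r hr.1.le hr.2).le

lemma exists_next_zero {f : ℝ → ℝ} (hf : Continuous f) {f' a b : ℝ} (hd : HasDerivAt f f' a)
    (ha : f a = 0) (hf' : f' < 0) (hab : a < b) (hb : 0 ≤ f b) :
    ∃ c, a < c ∧ f c = 0 ∧ ∀ r, a < r → r < c → f r < 0 := by
  have hsign := eventually_nhdsWithin_sign_eq_of_deriv_neg (hd.deriv ▸ hf') ha
  have hneg : ∀ᶠ r in 𝓝[>] a, f r < 0 := by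
    filter_upwards [hsign.filter_mono nhdsWithin_le_nhds, self_mem_nhdsWithin] with r hr har
    rwa [sign_neg (sub_neg.2 har.out), sign_eq_neg_one_iff] at hr
  obtain ⟨d, had, hd⟩ := mem_nhdsGT_iff_exists_Ioo_subset.1 hneg
  obtain ⟨e, hae, he⟩ := exists_between (lt_min had.out hab)
  obtain ⟨hed, heb⟩ := lt_min_iff.1 he
  obtain ⟨c, hec, hc, hfc⟩ := exists_first_zero hf.neg heb.le (neg_pos.2 (hd ⟨hae, hed⟩))
    (neg_nonpos.2 hb)
  refine ⟨c, hae.trans hec, neg_eq_zero.1 hc, fun r har hrc => ?_⟩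
  rcases lt_or_ge r e with hre | her
  · exact hd ⟨har, hre.trans hed⟩
  · exact neg_pos.1 (hfc r her hrc)

lemma nonneg_of_hasDerivAt_of_neg_left {f : ℝ → ℝ} {f' a c : ℝ} (hd : HasDerivAt f f' c)
    (hac : a < c) (hc : f c = 0) (hneg : ∀ r, a < r → r < c → f r < 0) : 0 ≤ f' := by
  by_contra! hf'
  have hsign := eventually_nhdsWithin_sign_eq_of_deriv_neg (hd.deriv ▸ hf') hc
  obtain ⟨r, hr, har, hrc⟩ := ((hsign.filter_mono (nhdsWithin_le_nhds (s := Set.Iio c))).and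
    (Ioo_mem_nhdsLT hac)).exists
  rw [sign_neg (hneg r har hrc), sign_pos (sub_pos.2 hrc)] at hr
  exact absurd hr (by decide)

namespace IsRadialKernel

lemma neg (hz : IsRadialKernel n V z z') : IsRadialKernel n V (fun r => -z r) fun r => -z' r where
  solves r hr := ⟨(hz.solves r hr).1.neg, (hz.solves r hr).2.neg.congr_deriv (by simp; ring)⟩
  continuous := hz.continuous.neg
  continuous_deriv := hz.continuous_deriv.neg
  deriv_zero := by rw [hz.deriv_zero, neg_zero]
  integrable := by simpa using hz.integrable

lemma continuous_radialWronskian (hz : IsRadialKernel n V z z') (hθ : IsRadialTest n V φ θ θ') :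
    Continuous (radialWronskian n z z' θ θ') :=
  (continuous_pow n).mul ((hz.continuous.mul hθ.continuous_deriv).sub
    (hz.continuous_deriv.mul hθ.continuous))

lemma integrableOn_radialWronskian (hz : IsRadialKernel n V z z') (hθ : IsRadialTest n V φ θ θ') :
    IntegrableOn (radialWronskian n z z' θ θ') (Set.Ioi 0) := by
  have hdecay : ExpDecay fun r => r ^ n * (θ r ^ 2 + θ' r ^ 2) :=
    (hθ.decay.sq.add hθ.decay_deriv.sq).pow_mul n
  have hθint : IntegrableOn (fun r => r ^ n * (θ r ^ 2 + θ' r ^ 2)) (Set.Ioi 0) :=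
    (hdecay.integrable ((continuous_pow n).mul ((hθ.continuous.pow 2).add
      (hθ.continuous_deriv.pow 2)))).integrableOn
  refine Integrable.mono' (hz.integrable.add hθint)
    (hz.continuous_radialWronskian hθ).aestronglyMeasurable
    ((ae_restrict_iff' measurableSet_Ioi).2 (.of_forall fun r hr => ?_))
  have hr₀ : 0 ≤ r ^ n := pow_nonneg hr.out.le n
  rw [radialWronskian, norm_mul, Real.norm_of_nonneg hr₀, Pi.add_apply, ← mul_add, Real.norm_eq_abs]
  gcongr
  rw [abs_le]
  constructor <;> nlinarith [sq_nonneg (z r + θ' r), sq_nonneg (z r - θ' r),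
    sq_nonneg (z' r - θ r), sq_nonneg (z' r + θ r)]

lemma radialWronskian_strictAntiOn (hz : IsRadialKernel n V z z') (hθ : IsRadialTest n V φ θ θ')
    {D : Set ℝ} (hD : Convex ℝ D) (hpos : interior D ⊆ Set.Ioi 0)
    (hsign : ∀ r ∈ interior D, z r * φ r < 0) : StrictAntiOn (radialWronskian n z z' θ θ') D :=
  strictAntiOn_of_hasDerivWithinAt_neg hD (hz.continuous_radialWronskian hθ).continuousOn
    (fun _ hr => (hz.solves.hasDerivAt_radialWronskian hθ.solves (hpos hr)).hasDerivWithinAt)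
    fun r hr => mul_neg_of_pos_of_neg (pow_pos (hpos hr) n) (hsign r hr)

variable {ρ : ℝ}

lemma deriv_mul_test_pos (hz : IsRadialKernel n V z z') (hρ : IsFirstZero z ρ) (hn : n ≠ 0)
    (hθ : IsRadialTest n V φ θ θ') (hφ : ∀ r, 0 < r → r < ρ → φ r < 0) : 0 < z' ρ * θ ρ := by
  have hanti : StrictAntiOn (radialWronskian n z z' θ θ') (Set.Icc 0 ρ) := by
    refine hz.radialWronskian_strictAntiOn hθ (convex_Icc 0 ρ) ?_ ?_ <;> rw [interior_Icc]
    · exact fun r hr => hr.1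
    · exact fun r hr => mul_neg_of_pos_of_neg (hρ.pos_of_lt r hr.1.le hr.2) (hφ r hr.1 hr.2)
  have hlt := hanti (Set.left_mem_Icc.2 hρ.pos.le) (Set.right_mem_Icc.2 hρ.pos.le) hρ.pos
  simp only [radialWronskian, hρ.eq_zero, zero_pow hn, zero_mul, zero_sub] at hlt
  linarith [neg_of_mul_neg_right hlt (pow_nonneg hρ.pos.le n)]

lemma exists_source_nonpos (hz : IsRadialKernel n V z z') (hρ : 0 < ρ) (hzρ : z ρ = 0)
    (hz'ρ : z' ρ < 0) (hθ : IsRadialTest n V φ θ θ') (hθρ : ∀ r, ρ ≤ r → θ r ≤ 0) :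
    ∃ r, ρ < r ∧ φ r ≤ 0 := by
  by_contra! hφ
  have hWρ : radialWronskian n z z' θ θ' ρ ≤ 0 := by
    rw [radialWronskian, hzρ, zero_mul, zero_sub]
    have hprod := mul_nonneg_of_nonpos_of_nonpos hz'ρ.le (hθρ ρ le_rfl)
    exact mul_nonpos_of_nonneg_of_nonpos (pow_nonneg hρ.le n) (neg_nonpos.2 hprod)
  by_cases hnext : ∃ b, ρ < b ∧ 0 ≤ z b
  · obtain ⟨b, hρb, hb⟩ := hnext
    obtain ⟨c, hρc, hzc, hneg⟩ :=
      exists_next_zero hz.continuous (hz.solves ρ hρ).1 hzρ hz'ρ hρb hb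
    have hz'c : 0 ≤ z' c :=
      nonneg_of_hasDerivAt_of_neg_left (hz.solves c (hρ.trans hρc)).1 hρc hzc hneg
    have hanti : StrictAntiOn (radialWronskian n z z' θ θ') (Set.Icc ρ c) := by
      refine hz.radialWronskian_strictAntiOn hθ (convex_Icc ρ c) ?_ ?_ <;> rw [interior_Icc]
      · exact fun r hr => hρ.trans hr.1
      · exact fun r hr => mul_neg_of_neg_of_pos (hneg r hr.1 hr.2) (hφ r hr.1)
    have hWc : 0 ≤ radialWronskian n z z' θ θ' c := by
      rw [radialWronskian, hzc, zero_mul, zero_sub]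
      have hprod := mul_nonpos_of_nonneg_of_nonpos hz'c (hθρ c hρc.le)
      exact mul_nonneg (pow_nonneg (hρ.trans hρc).le n) (neg_nonneg.2 hprod)
    linarith [hanti (Set.left_mem_Icc.2 hρc.le) (Set.right_mem_Icc.2 hρc.le) hρc]
  · push Not at hnext
    have hanti : StrictAntiOn (radialWronskian n z z' θ θ') (Set.Ici ρ) := by
      refine hz.radialWronskian_strictAntiOn hθ (convex_Ici ρ) ?_ ?_ <;> rw [interior_Ici]
      · exact fun r hr => hρ.trans hr
      · exact fun r hr => mul_neg_of_neg_of_pos (hnext r hr) (hφ r hr)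
    exact not_integrableOn_of_strictAntiOn hanti hWρ
      ((hz.integrableOn_radialWronskian hθ).mono_set (Set.Ioi_subset_Ioi hρ.le))

end IsRadialKernel

end RadialODE

/-! ### Nondegeneracy of radial profiles -/

/-- A decreasing, exponentially decaying radial solution `w` of `-Δw = f(w)` on `ℝ^(n+1)`, together
with the compositions `f = f(w)`, `V = f'(w)` and `F = F(w)` with the derivative and primitive of
the nonlinearity, all of them as functions of the radius; `b` is the radius where `f` changes
sign. -/
structure RadialProfile (n : ℕ) where
  (w w' w'' f V F : ℝ → ℝ)
  b : ℝ
  hasDerivAt_w (r : ℝ) : HasDerivAt w (w' r) r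
  hasDerivAt_w' (r : ℝ) : HasDerivAt w' (w'' r) r
  hasDerivAt_f (r : ℝ) : HasDerivAt f (V r * w' r) r
  hasDerivAt_F (r : ℝ) : HasDerivAt F (f r * w' r) r
  continuous_w'' : Continuous w''
  ode {r : ℝ} : 0 < r → w'' r = -(n / r * w' r) - f r
  w'_zero : w' 0 = 0
  w_pos (r : ℝ) : 0 < w r
  w'_neg {r : ℝ} : 0 < r → w' r < 0
  decay_w : ExpDecay w
  decay_w' : ExpDecay w'
  decay_w'' : ExpDecay w''
  decay_f : ExpDecay f
  decay_F : ExpDecay F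
  exists_abs_V_le : ∃ M, ∀ r, |V r| ≤ M
  f_pos {r : ℝ} : 0 < r → r < b → 0 < f r
  f_b : f b = 0
  f_neg {r : ℝ} : b < r → f r < 0
  excess_pos_of_le {r : ℝ} : b ≤ r → 0 < V r * w r - f r
  excess_mul_lt {r₁ r₀ : ℝ} : 0 < r₁ → r₁ < r₀ → r₀ < b →
    (V r₁ * w r₁ - f r₁) * f r₀ < (V r₀ * w r₀ - f r₀) * f r₁
  pohozaev_nonneg_of_le {r₁ r₀ : ℝ} : 1 ≤ n → 0 < r₁ → r₁ ≤ r₀ →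
    0 ≤ (n + 1) * F r₀ - (n - 1) / 2 * (w r₀ * f r₀) →
    0 ≤ (n + 1) * F r₁ - (n - 1) / 2 * (w r₁ * f r₁)

namespace RadialProfile

variable {n : ℕ} (P : RadialProfile n)

lemma continuous_w : Continuous P.w :=
  continuous_iff_continuousAt.2 fun r => (P.hasDerivAt_w r).continuousAt

lemma continuous_w' : Continuous P.w' :=
  continuous_iff_continuousAt.2 fun r => (P.hasDerivAt_w' r).continuousAt

lemma hasDerivAt_w'' {r : ℝ} (hr : 0 < r) :
    HasDerivAt P.w'' (n / r ^ 2 * P.w' r - n / r * P.w'' r - P.V r * P.w' r) r := by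
  have hrhs : HasDerivAt (fun r => -(n / r * P.w' r) - P.f r)
      (n / r ^ 2 * P.w' r - n / r * P.w'' r - P.V r * P.w' r) r := by
    have hquot : HasDerivAt (fun r : ℝ => n / r) (-(n / r ^ 2)) r :=
      ((hasDerivAt_inv hr.ne').const_mul (n : ℝ)).congr_deriv (by ring)
    exact ((hquot.mul (P.hasDerivAt_w' r)).neg.sub (P.hasDerivAt_f r)).congr_deriv (by ring)
  refine hrhs.congr_of_eventuallyEq ?_
  filter_upwards [lt_mem_nhds hr] with s hs using P.ode hs

lemma isRadialTest_w :
    IsRadialTest n P.V (fun r => P.V r * P.w r - P.f r) P.w P.w' where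
  solves r hr :=
    ⟨P.hasDerivAt_w r, (P.hasDerivAt_w' r).congr_deriv (by rw [P.ode hr]; ring)⟩
  continuous := P.continuous_w
  continuous_deriv := P.continuous_w'
  decay := P.decay_w
  decay_deriv := P.decay_w'

lemma isRadialTest_w' : IsRadialTest n P.V (fun r => n / r ^ 2 * P.w' r) P.w' P.w'' where
  solves r hr := ⟨P.hasDerivAt_w' r, P.hasDerivAt_w'' hr⟩
  continuous := P.continuous_w'
  continuous_deriv := P.continuous_w''
  decay := P.decay_w'
  decay_deriv := P.decay_w''

lemma isRadialTest_dilation : IsRadialTest n P.V (fun r => -2 * P.f r) (fun r => r * P.w' r)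
    fun r => P.w' r + r * P.w'' r where
  solves r hr := by
    refine ⟨((hasDerivAt_id r).mul (P.hasDerivAt_w' r)).congr_deriv (by simp), ?_⟩
    refine ((P.hasDerivAt_w' r).add
      ((hasDerivAt_id r).mul (P.hasDerivAt_w'' hr))).congr_deriv ?_
    simp only [P.ode hr, id]
    field_simp
    ring
  continuous := continuous_id.mul P.continuous_w'
  continuous_deriv := P.continuous_w'.add (continuous_id.mul P.continuous_w'')
  decay := P.decay_w'.id_mul
  decay_deriv := P.decay_w'.add P.decay_w''.id_mul

variable {P} {z z' : ℝ → ℝ} {ρ : ℝ}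

lemma exists_isFirstZero (hz : IsRadialKernel n P.V z z') (hn : n ≠ 0) (h₀ : 0 < z 0) :
    ∃ ρ, IsFirstZero z ρ := by
  suffices hex : ∃ b, 0 ≤ b ∧ z b ≤ 0 by
    obtain ⟨b, hb, hzb⟩ := hex
    obtain ⟨ρ, hρ, hzρ, hpos⟩ := exists_first_zero hz.continuous hb h₀ hzb
    exact ⟨ρ, hρ, hzρ, hpos⟩
  by_contra! hpos
  have hanti : StrictAntiOn (radialWronskian n z z' P.w' P.w'') (Set.Ici 0) := by
    refine hz.radialWronskian_strictAntiOn P.isRadialTest_w' (convex_Ici 0) ?_ ?_ <;>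
      rw [interior_Ici]
    intro r hr
    have hr₀ : 0 < r := hr
    exact mul_neg_of_pos_of_neg (hpos r hr₀.le)
      (mul_neg_of_pos_of_neg (by positivity) (P.w'_neg hr₀))
  exact not_integrableOn_of_strictAntiOn hanti (by simp [radialWronskian, hn])
    (hz.integrableOn_radialWronskian P.isRadialTest_w')

lemma deriv_neg_of_isFirstZero (hz : IsRadialKernel n P.V z z') (hn : n ≠ 0)
    (hρ : IsFirstZero z ρ) : z' ρ < 0 := by
  have hprod := hz.deriv_mul_test_pos hρ hn P.isRadialTest_w' fun r hr _ =>
    mul_neg_of_pos_of_neg (by positivity) (P.w'_neg hr)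
  exact neg_of_mul_pos_left hprod (P.w'_neg hρ.pos).le

lemma lt_b_of_isFirstZero (hz : IsRadialKernel n P.V z z') (hn : n ≠ 0) (hρ : IsFirstZero z ρ) :
    ρ < P.b := by
  by_contra! hb
  obtain ⟨r, hρr, hr⟩ := hz.exists_source_nonpos hρ.pos hρ.eq_zero
    (deriv_neg_of_isFirstZero hz hn hρ) P.isRadialTest_dilation fun r hr =>
      mul_nonpos_of_nonneg_of_nonpos (hρ.pos.le.trans hr) (P.w'_neg (hρ.pos.trans_le hr)).le
  linarith [P.f_neg (hb.trans_lt hρr)]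

lemma excess_pos_of_isFirstZero (hz : IsRadialKernel n P.V z z') (hn : n ≠ 0)
    (hρ : IsFirstZero z ρ) : 0 < P.V ρ * P.w ρ - P.f ρ := by
  have hρb := lt_b_of_isFirstZero hz hn hρ
  by_contra! hexcess
  have hneg : ∀ r, 0 < r → r < ρ → P.V r * P.w r - P.f r < 0 := fun r hr hrρ => by
    have hmono := P.excess_mul_lt hr hrρ hρb
    have hrhs := mul_nonpos_of_nonpos_of_nonneg hexcess (P.f_pos hr (hrρ.trans hρb)).le
    exact neg_of_mul_neg_left (hmono.trans_le hrhs) (P.f_pos hρ.pos hρb).le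
  have hprod := hz.deriv_mul_test_pos hρ hn P.isRadialTest_w hneg
  exact hprod.not_ge (mul_nonpos_of_nonpos_of_nonneg (deriv_neg_of_isFirstZero hz hn hρ).le
    (P.w_pos ρ).le)

lemma excess_lt_of_lt {κ r : ℝ} (hκ : P.V ρ * P.w ρ - P.f ρ = κ * P.f ρ) (hρb : ρ < P.b)
    (hr : 0 < r) (hrρ : r < ρ) : P.V r * P.w r - P.f r < κ * P.f r := by
  have hmono := P.excess_mul_lt hr hrρ hρb
  rw [hκ, mul_right_comm] at hmono
  exact lt_of_mul_lt_mul_right hmono (P.f_pos (hr.trans hrρ) hρb).le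

lemma lt_excess_of_lt {κ r : ℝ} (hκ : P.V ρ * P.w ρ - P.f ρ = κ * P.f ρ) (hκ₀ : 0 < κ)
    (hρ : 0 < ρ) (hρr : ρ < r) : κ * P.f r < P.V r * P.w r - P.f r := by
  rcases lt_trichotomy r P.b with hrb | rfl | hbr
  · have hmono := P.excess_mul_lt hρ hρr hrb
    rw [hκ, mul_right_comm] at hmono
    exact lt_of_mul_lt_mul_right hmono (P.f_pos hρ (hρr.trans hrb)).le
  · simpa only [P.f_b, mul_zero] using P.excess_pos_of_le le_rfl
  · exact (mul_neg_of_pos_of_neg hκ₀ (P.f_neg hbr)).trans (P.excess_pos_of_le hbr.le)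

lemma excess_pos_of_gt {κ r : ℝ} (hκ : P.V ρ * P.w ρ - P.f ρ = κ * P.f ρ) (hκ₀ : 0 < κ)
    (hρ : 0 < ρ) (hρr : ρ < r) : 0 < P.V r * P.w r - P.f r := by
  rcases lt_or_ge r P.b with hrb | hbr
  · exact (mul_pos hκ₀ (P.f_pos (hρ.trans hρr) hrb)).trans (lt_excess_of_lt hκ hκ₀ hρ hρr)
  · exact P.excess_pos_of_le hbr

lemma two_mul_F_le (hρ : 0 < ρ) (hexcess : ∀ r, ρ < r → 0 < P.V r * P.w r - P.f r) {r : ℝ}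
    (hr : ρ ≤ r) : 2 * P.F r ≤ P.w r * P.f r := by
  set Q : ℝ → ℝ := fun r => P.w r * P.f r - 2 * P.F r
  have hderiv (r : ℝ) : HasDerivAt Q (P.w' r * (P.V r * P.w r - P.f r)) r :=
    (((P.hasDerivAt_w r).mul (P.hasDerivAt_f r)).sub
      ((P.hasDerivAt_F r).const_mul 2)).congr_deriv (by ring)
  have hanti : AntitoneOn Q (Set.Ici ρ) := by
    refine antitoneOn_of_hasDerivWithinAt_nonpos (convex_Ici ρ)
      (fun r _ => (hderiv r).continuousAt.continuousWithinAt)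
      (fun r _ => (hderiv r).hasDerivWithinAt) fun r hr => ?_
    rw [interior_Ici] at hr
    exact mul_nonpos_of_nonpos_of_nonneg (P.w'_neg (hρ.trans hr)).le (hexcess r hr).le
  have hlim : Tendsto Q atTop (𝓝 0) :=
    ((P.decay_w.mul P.decay_f).sub (P.decay_F.const_mul 2)).tendsto_atTop
  refine sub_nonneg.1 (le_of_tendsto hlim ?_)
  filter_upwards [eventually_ge_atTop r] with s hs
  exact hanti (Set.mem_Ici.2 hr) (Set.mem_Ici.2 (hr.trans hs)) hs

variable (P)

/-- The Pohozaev function of a profile; its derivative is `r ^ n` times the Pohozaev density. -/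
def pohozaev (r : ℝ) : ℝ :=
  r ^ (n + 1) * (P.w' r ^ 2 / 2 + P.F r) + (n - 1) / 2 * (r ^ n * (P.w r * P.w' r))

lemma continuous_pohozaev : Continuous P.pohozaev := by
  have hw := P.continuous_w
  have hw' := P.continuous_w'
  have hF : Continuous P.F := continuous_iff_continuousAt.2 fun r => (P.hasDerivAt_F r).continuousAt
  unfold pohozaev
  fun_prop

lemma tendsto_pohozaev : Tendsto P.pohozaev atTop (𝓝 0) := by
  have hkinetic : ExpDecay fun r => P.w' r ^ 2 / 2 := by
    simpa only [div_eq_inv_mul] using P.decay_w'.sq.const_mul 2⁻¹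
  exact (((hkinetic.add P.decay_F).pow_mul (n + 1)).add
    (((P.decay_w.mul P.decay_w').pow_mul n).const_mul _)).tendsto_atTop

lemma hasDerivAt_pohozaev (hn : 1 ≤ n) {r : ℝ} (hr : 0 < r) : HasDerivAt P.pohozaev
    (r ^ n * ((n + 1) * P.F r - (n - 1) / 2 * (P.w r * P.f r))) r := by
  have hleading := (hasDerivAt_pow (n + 1) r).mul
    ((((P.hasDerivAt_w' r).pow 2).div_const 2).add (P.hasDerivAt_F r))
  have hcorrection := ((hasDerivAt_pow n r).mul
    ((P.hasDerivAt_w r).mul (P.hasDerivAt_w' r))).const_mul (((n : ℝ) - 1) / 2)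
  refine (hleading.add hcorrection).congr_deriv ?_
  obtain ⟨k, rfl⟩ := Nat.exists_eq_add_of_le' hn
  simp only [Pi.mul_apply, Pi.add_apply, Pi.pow_apply, P.ode hr, Nat.add_sub_cancel]
  push_cast
  field_simp
  ring

lemma pohozaev_nonneg (hn : 1 ≤ n) {r : ℝ} (hr : 0 < r) : 0 ≤ P.pohozaev r := by
  set density : ℝ → ℝ := fun r => (n + 1) * P.F r - (n - 1) / 2 * (P.w r * P.f r)
  rcases le_or_gt 0 (density r) with hnonneg | hneg
  · have hmono : MonotoneOn P.pohozaev (Set.Icc 0 r) := by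
      refine monotoneOn_of_hasDerivWithinAt_nonneg (convex_Icc 0 r)
        P.continuous_pohozaev.continuousOn (f' := fun s => s ^ n * density s) ?_ ?_ <;>
        rw [interior_Icc]
      · exact fun s hs => (P.hasDerivAt_pohozaev hn hs.1).hasDerivWithinAt
      · exact fun s hs => mul_nonneg (pow_nonneg hs.1.le n)
          (P.pohozaev_nonneg_of_le hn hs.1 hs.2.le hnonneg)
    have hle := hmono (Set.left_mem_Icc.2 hr.le) (Set.right_mem_Icc.2 hr.le) hr.le
    simpa [pohozaev, Nat.one_le_iff_ne_zero.1 hn] using hle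
  · have hanti : AntitoneOn P.pohozaev (Set.Ici r) := by
      refine antitoneOn_of_hasDerivWithinAt_nonpos (convex_Ici r)
        P.continuous_pohozaev.continuousOn (f' := fun s => s ^ n * density s) ?_ ?_ <;>
        rw [interior_Ici]
      · exact fun s hs => (P.hasDerivAt_pohozaev hn (hr.trans hs)).hasDerivWithinAt
      · refine fun s hs => mul_nonpos_of_nonneg_of_nonpos (pow_nonneg (hr.trans hs).le n) ?_
        by_contra! hs'
        exact hneg.not_ge (P.pohozaev_nonneg_of_le hn hr (le_of_lt hs) hs'.le)
    refine le_of_tendsto P.tendsto_pohozaev ?_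
    filter_upwards [eventually_ge_atTop r] with s hs
    exact hanti Set.self_mem_Ici (Set.mem_Ici.2 hs) hs

variable {P}

lemma logDeriv_antitoneOn (hn : 1 ≤ n) (hρ : 0 < ρ)
    (hexcess : ∀ r, ρ < r → 0 < P.V r * P.w r - P.f r) :
    AntitoneOn (fun r => r * P.w' r / P.w r) (Set.Ici ρ) := by
  have hderiv (r : ℝ) : HasDerivAt (fun r => r * P.w' r / P.w r)
      (((P.w' r + r * P.w'' r) * P.w r - r * P.w' r ^ 2) / P.w r ^ 2) r :=
    (((hasDerivAt_id r).mul (P.hasDerivAt_w' r)).div (P.hasDerivAt_w r)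
      (P.w_pos r).ne').congr_deriv (by simp only [id, Pi.mul_apply]; ring)
  refine antitoneOn_of_hasDerivWithinAt_nonpos (convex_Ici ρ)
    (fun r _ => (hderiv r).continuousAt.continuousWithinAt)
    (fun r _ => (hderiv r).hasDerivWithinAt) fun r hr => ?_
  rw [interior_Ici] at hr
  have hr₀ : 0 < r := hρ.trans hr
  refine div_nonpos_of_nonpos_of_nonneg ?_ (sq_nonneg _)
  have hpohozaev := P.pohozaev_nonneg hn hr₀
  have hsuper := mul_nonneg (pow_pos hr₀ (n + 1)).le
    (sub_nonneg.2 (two_mul_F_le hρ hexcess (le_of_lt hr)))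
  have hsum : r ^ n * ((P.w' r + r * P.w'' r) * P.w r - r * P.w' r ^ 2) = -(2 * P.pohozaev r
      + r ^ (n + 1) * (P.w r * P.f r - 2 * P.F r)) := by
    rw [pohozaev, P.ode hr₀]
    field_simp
    ring
  exact nonpos_of_mul_nonpos_right (by linarith) (pow_pos hr₀ n)

lemma kernel_zero_not_pos (hz : IsRadialKernel n P.V z z') (hn : n ≠ 0) : ¬0 < z 0 := by
  intro h₀
  obtain ⟨ρ, hρ⟩ := exists_isFirstZero hz hn h₀
  have hfρ := P.f_pos hρ.pos (lt_b_of_isFirstZero hz hn hρ)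
  set κ := (P.V ρ * P.w ρ - P.f ρ) / P.f ρ
  have hκ : P.V ρ * P.w ρ - P.f ρ = κ * P.f ρ := (div_mul_cancel₀ _ hfρ.ne').symm
  have hκ₀ : 0 < κ := div_pos (excess_pos_of_isFirstZero hz hn hρ) hfρ
  have htest := P.isRadialTest_w.linear_comb P.isRadialTest_dilation 2 κ
  have hz'ρ := deriv_neg_of_isFirstZero hz hn hρ
  have htestρ : 2 * P.w ρ + κ * (ρ * P.w' ρ) < 0 := by
    have hprod := hz.deriv_mul_test_pos hρ hn htest fun r hr hrρ => by
      linarith [excess_lt_of_lt hκ (lt_b_of_isFirstZero hz hn hρ) hr hrρ]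
    exact neg_of_mul_pos_right hprod hz'ρ.le
  have htest_nonpos : ∀ r, ρ ≤ r → 2 * P.w r + κ * (r * P.w' r) ≤ 0 := fun r hr => by
    have hanti := logDeriv_antitoneOn (Nat.one_le_iff_ne_zero.2 hn) hρ.pos
      (fun s => excess_pos_of_gt hκ hκ₀ hρ.pos) Set.self_mem_Ici (Set.mem_Ici.2 hr) hr
    have heq (s : ℝ) : 2 * P.w s + κ * (s * P.w' s) = (2 + κ * (s * P.w' s / P.w s)) * P.w s := by
      have := (P.w_pos s).ne'
      field_simp
    rw [heq] at htestρ ⊢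
    refine mul_nonpos_of_nonpos_of_nonneg ?_ (P.w_pos r).le
    linarith [neg_of_mul_neg_left htestρ (P.w_pos ρ).le, mul_le_mul_of_nonneg_left hanti hκ₀.le]
  obtain ⟨r, hρr, hr⟩ := hz.exists_source_nonpos hρ.pos hρ.eq_zero hz'ρ htest htest_nonpos
  linarith [lt_excess_of_lt hκ hκ₀ hρ.pos hρr]

lemma w''_zero_ne_zero (P : RadialProfile 0) : P.w'' 0 ≠ 0 := by
  intro h₀
  obtain ⟨M, hM⟩ := P.exists_abs_V_le
  have hsolves : SolvesRadialODE 0 P.V 0 P.w' P.w'' := by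
    intro r hr
    simpa using P.isRadialTest_w'.solves r hr
  exact (P.w'_neg one_pos).ne (hsolves.eq_zero P.continuous_w' P.continuous_w'' (fun r _ => hM r)
    P.w'_zero h₀ zero_le_one)

lemma kernel_zero_eq_zero_of_line {P : RadialProfile 0} (hz : IsRadialKernel 0 P.V z z') :
    z 0 = 0 := by
  set W := radialWronskian 0 z z' P.w' P.w''
  have hderiv : ∀ r, 0 < r → HasDerivAt W 0 r := fun r hr =>
    (hz.solves.hasDerivAt_radialWronskian P.isRadialTest_w'.solves hr).congr_deriv (by simp)
  have hconst : ∀ r, 0 < r → W r = W 0 := fun r hr => by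
    obtain ⟨c, -, hc⟩ := exists_hasDerivAt_eq_slope W 0 hr
      (hz.continuous_radialWronskian P.isRadialTest_w').continuousOn fun x hx => hderiv x hx.1
    have hslope := (div_eq_zero_iff.1 hc.symm).resolve_right (by simpa using hr.ne')
    exact sub_eq_zero.1 hslope
  have hint : IntegrableOn (fun _ : ℝ => W 0) (Set.Ioi 0) :=
    (hz.integrableOn_radialWronskian P.isRadialTest_w').congr_fun hconst measurableSet_Ioi
  have hW : W 0 = 0 := by
    rcases (integrableOn_const_iff (by finiteness)).1 hint with hzero | hfin
    · simpa using hzero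
    · simp at hfin
  simpa [W, radialWronskian, P.w'_zero, P.w''_zero_ne_zero] using hW

theorem kernel_eq_zero (hz : IsRadialKernel n P.V z z') {r : ℝ} (hr : 0 ≤ r) : z r = 0 := by
  obtain ⟨M, hM⟩ := P.exists_abs_V_le
  refine hz.solves.eq_zero hz.continuous hz.continuous_deriv (fun r _ => hM r) ?_ hz.deriv_zero hr
  rcases eq_or_ne n 0 with rfl | hn
  · exact kernel_zero_eq_zero_of_line hz
  · have hnonneg : 0 ≤ z 0 := by simpa using kernel_zero_not_pos hz.neg hn
    exact (not_lt.1 (kernel_zero_not_pos hz hn)).antisymm hnonneg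

end RadialProfile

/-! ### Directional derivatives and the Laplacian -/

section DirectionalDerivative

open scoped ContDiff

variable {E : Type*} [NormedAddCommGroup E] [NormedSpace ℝ E] {f g : E → ℝ}

/-- The derivative `∂ₑf` of `f` in the direction `e`, as a function of the base point. -/
def dirDeriv (e : E) (f : E → ℝ) (x : E) : ℝ := fderiv ℝ f x e

lemma contDiff_dirDeriv (hf : ContDiff ℝ ∞ f) (e : E) : ContDiff ℝ ∞ (dirDeriv e f) :=
  (hf.fderiv_right (m := ∞) (by simp)).clm_apply contDiff_const

lemma continuous_dirDeriv (hf : ContDiff ℝ ∞ f) (e : E) : Continuous (dirDeriv e f) :=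
  (contDiff_dirDeriv hf e).continuous

lemma differentiable_dirDeriv (hf : ContDiff ℝ ∞ f) (e : E) : Differentiable ℝ (dirDeriv e f) :=
  (contDiff_dirDeriv hf e).differentiable (by simp)

lemma dirDeriv_smul_dir (c : ℝ) (e : E) (f : E → ℝ) (x : E) :
    dirDeriv (c • e) f x = c * dirDeriv e f x := by
  simp [dirDeriv]

lemma dirDeriv_sub_dir (a b : E) (f : E → ℝ) (x : E) :
    dirDeriv (a - b) f x = dirDeriv a f x - dirDeriv b f x := by
  simp [dirDeriv]

lemma dirDeriv_mul (hf : Differentiable ℝ f) (hg : Differentiable ℝ g) (e : E) :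
    dirDeriv e (fun y => f y * g y) = fun y => f y * dirDeriv e g y + g y * dirDeriv e f y := by
  funext x
  simp [dirDeriv, fderiv_fun_mul (hf x) (hg x)]

lemma dirDeriv_add (hf : Differentiable ℝ f) (hg : Differentiable ℝ g) (e : E) :
    dirDeriv e (fun y => f y + g y) = fun y => dirDeriv e f y + dirDeriv e g y := by
  funext x
  simp [dirDeriv, fderiv_fun_add (hf x) (hg x)]

lemma dirDeriv_sub (hf : Differentiable ℝ f) (hg : Differentiable ℝ g) (e : E) :
    dirDeriv e (fun y => f y - g y) = fun y => dirDeriv e f y - dirDeriv e g y := by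
  funext x
  simp [dirDeriv, fderiv_fun_sub (hf x) (hg x)]

lemma dirDeriv_sum {ι : Type*} (s : Finset ι) {f : ι → E → ℝ} (hf : ∀ i, Differentiable ℝ (f i))
    (e : E) : dirDeriv e (fun y => ∑ i ∈ s, f i y) = fun y => ∑ i ∈ s, dirDeriv e (f i) y := by
  funext x
  simp [dirDeriv, fderiv_fun_sum fun i _ => hf i x]

lemma dirDeriv_comp {φ : ℝ → ℝ} {φ' : ℝ} {x : E} (hφ : HasDerivAt φ φ' (f x))
    (hf : DifferentiableAt ℝ f x) (e : E) :
    dirDeriv e (fun y => φ (f y)) x = φ' * dirDeriv e f x := by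
  have hcomp : fderiv ℝ (fun y => φ (f y)) x = φ' • fderiv ℝ f x :=
    (hφ.comp_hasFDerivAt x hf.hasFDerivAt).fderiv
  simp [dirDeriv, hcomp]

lemma dirDeriv_dirDeriv (hf : ContDiff ℝ ∞ f) (a b x : E) :
    dirDeriv a (dirDeriv b f) x = fderiv ℝ (fderiv ℝ f) x a b := by
  have hdiff : Differentiable ℝ (fderiv ℝ f) :=
    (hf.fderiv_right (m := ∞) (by simp)).differentiable (by simp)
  change fderiv ℝ (fun y => fderiv ℝ f y b) x a = _
  simp [fderiv_clm_apply (hdiff x) (differentiableAt_const b)]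

lemma dirDeriv_comm (hf : ContDiff ℝ ∞ f) (a b : E) :
    dirDeriv a (dirDeriv b f) = dirDeriv b (dirDeriv a f) := by
  funext x
  have hsymm : IsSymmSndFDerivAt ℝ f x := hf.contDiffAt.isSymmSndFDerivAt (by
    rw [minSmoothness_of_isRCLikeNormedField]
    exact WithTop.coe_le_coe.2 (le_top : (2 : ℕ∞) ≤ ⊤))
  rw [dirDeriv_dirDeriv hf, dirDeriv_dirDeriv hf, hsymm a b]

lemma dirDeriv_comp_linearIsometryEquiv (hf : Differentiable ℝ f) (R : E ≃ₗᵢ[ℝ] E) (e : E) :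
    dirDeriv e (fun x => f (R x)) = fun x => dirDeriv (R e) f (R x) := by
  funext x
  have hR : HasFDerivAt (fun x => R x) (R.toContinuousLinearEquiv : E →L[ℝ] E) x :=
    R.toContinuousLinearEquiv.hasFDerivAt
  have hcomp := ((hf (R x)).hasFDerivAt.comp x hR).fderiv
  change fderiv ℝ (f ∘ fun x => R x) x e = _
  rw [hcomp]
  rfl

lemma contDiff_comp_linearIsometryEquiv (hf : ContDiff ℝ ∞ f) (R : E ≃ₗᵢ[ℝ] E) :
    ContDiff ℝ ∞ fun x => f (R x) :=
  hf.comp R.toContinuousLinearEquiv.contDiff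

lemma hasDerivAt_comp_line (hf : Differentiable ℝ f) (y e : E) (t : ℝ) :
    HasDerivAt (fun t : ℝ => f (y + t • e)) (dirDeriv e f (y + t • e)) t := by
  have hline : HasDerivAt (fun t : ℝ => y + t • e) e t := by
    simpa using ((hasDerivAt_id t).smul_const e).const_add y
  exact (hf _).hasFDerivAt.comp_hasDerivAt t hline

lemma hasDerivAt_comp_ray (hf : Differentiable ℝ f) (e : E) (t : ℝ) :
    HasDerivAt (fun t : ℝ => f (t • e)) (dirDeriv e f (t • e)) t := by
  simpa using hasDerivAt_comp_line hf 0 e t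

end DirectionalDerivative

section Laplacian

open scoped ContDiff

variable {N : ℕ} {f g : EuclideanSpace ℝ (Fin N) → ℝ}

lemma pd_eq_dirDeriv (i : Fin N) (f : EuclideanSpace ℝ (Fin N) → ℝ) :
    pd i f = dirDeriv (EuclideanSpace.single i 1) f := rfl

lemma dirDeriv_eq_sum_pd (e : EuclideanSpace ℝ (Fin N)) (f : EuclideanSpace ℝ (Fin N) → ℝ)
    (x : EuclideanSpace ℝ (Fin N)) : dirDeriv e f x = ∑ i, e i * pd i f x := by
  unfold dirDeriv
  conv_lhs => rw [← (EuclideanSpace.basisFun (Fin N) ℝ).sum_repr e]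
  simp [pd]

lemma sq_dirDeriv_le_gradsq {e : EuclideanSpace ℝ (Fin N)} (he : ‖e‖ = 1)
    (f : EuclideanSpace ℝ (Fin N) → ℝ) (x : EuclideanSpace ℝ (Fin N)) :
    dirDeriv e f x ^ 2 ≤ gradsq f x := by
  have hnorm : ∑ i, e i ^ 2 = 1 := by rw [← EuclideanSpace.real_norm_sq_eq, he, one_pow]
  calc dirDeriv e f x ^ 2 = (∑ i, e i * pd i f x) ^ 2 := by rw [dirDeriv_eq_sum_pd]
    _ ≤ (∑ i, e i ^ 2) * ∑ i, pd i f x ^ 2 := Finset.sum_mul_sq_le_sq_mul_sq _ _ _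
    _ = gradsq f x := by rw [hnorm, one_mul, gradsq]

lemma lap_mul (hf : ContDiff ℝ ∞ f) (hg : ContDiff ℝ ∞ g) (x : EuclideanSpace ℝ (Fin N)) :
    lap (fun y => f y * g y) x =
      f x * lap g x + 2 * ∑ i, pd i f x * pd i g x + g x * lap f x := by
  have hf' := hf.differentiable (by simp)
  have hg' := hg.differentiable (by simp)
  simp only [lap, pd_eq_dirDeriv, Finset.mul_sum, ← Finset.sum_add_distrib]
  refine Finset.sum_congr rfl fun i _ => ?_
  have hdf := differentiable_dirDeriv hf (EuclideanSpace.single i 1)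
  have hdg := differentiable_dirDeriv hg (EuclideanSpace.single i 1)
  rw [dirDeriv_mul hf' hg', dirDeriv_add (hf'.fun_mul hdg) (hg'.fun_mul hdf), dirDeriv_mul hf' hdg,
    dirDeriv_mul hg' hdf]
  ring

lemma lap_comp {φ φ' φ'' : ℝ → ℝ} (hφ : ∀ t, HasDerivAt φ (φ' t) t)
    (hφ' : ∀ t, HasDerivAt φ' (φ'' t) t) (hf : ContDiff ℝ ∞ f) (x : EuclideanSpace ℝ (Fin N)) :
    lap (fun y => φ (f y)) x = φ'' (f x) * gradsq f x + φ' (f x) * lap f x := by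
  have hf' := hf.differentiable (by simp)
  have hcomp : Differentiable ℝ fun y => φ' (f y) := fun y =>
    (hφ' (f y)).differentiableAt.comp y (hf' y)
  simp only [lap, gradsq, pd_eq_dirDeriv, Finset.mul_sum, ← Finset.sum_add_distrib]
  refine Finset.sum_congr rfl fun i _ => ?_
  have hfirst (e : EuclideanSpace ℝ (Fin N)) :
      dirDeriv e (fun y => φ (f y)) = fun y => φ' (f y) * dirDeriv e f y :=
    funext fun y => dirDeriv_comp (hφ _) (hf' y) e
  rw [hfirst, dirDeriv_mul hcomp (differentiable_dirDeriv hf _)]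
  simp only [dirDeriv_comp (hφ' _) (hf' x)]
  ring

lemma lap_sq (hf : ContDiff ℝ ∞ f) (x : EuclideanSpace ℝ (Fin N)) :
    lap (fun y => f y ^ 2) x = 2 * gradsq f x + 2 * f x * lap f x :=
  lap_comp (φ := fun t => t ^ 2) (φ' := fun t => 2 * t) (φ'' := fun _ => 2)
    (fun t => by simpa using hasDerivAt_pow 2 t)
    (fun t => by simpa using (hasDerivAt_id t).const_mul (2 : ℝ)) hf x

lemma lap_sub (hf : ContDiff ℝ ∞ f) (hg : ContDiff ℝ ∞ g) (x : EuclideanSpace ℝ (Fin N)) :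
    lap (fun y => f y - g y) x = lap f x - lap g x := by
  simp only [lap, pd_eq_dirDeriv, ← Finset.sum_sub_distrib]
  refine Finset.sum_congr rfl fun i _ => ?_
  rw [dirDeriv_sub (hf.differentiable (by simp)) (hg.differentiable (by simp)),
    dirDeriv_sub (differentiable_dirDeriv hf _) (differentiable_dirDeriv hg _)]

lemma dirDeriv_lap (hf : ContDiff ℝ ∞ f) (e : EuclideanSpace ℝ (Fin N)) :
    dirDeriv e (lap f) = lap (dirDeriv e f) := by
  change dirDeriv e (fun x => ∑ i, dirDeriv (EuclideanSpace.single i 1)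
    (dirDeriv (EuclideanSpace.single i 1) f) x) = _
  rw [dirDeriv_sum _ fun i => differentiable_dirDeriv (contDiff_dirDeriv hf _) _]
  funext x
  refine Finset.sum_congr rfl fun i _ => ?_
  simp only [pd_eq_dirDeriv]
  rw [dirDeriv_comm (contDiff_dirDeriv hf _), dirDeriv_comm hf e]

lemma lap_eq_sum_orthonormalBasis (hf : ContDiff ℝ ∞ f)
    (b : OrthonormalBasis (Fin N) ℝ (EuclideanSpace ℝ (Fin N))) (x : EuclideanSpace ℝ (Fin N)) :
    lap f x = ∑ i, dirDeriv (b i) (dirDeriv (b i) f) x := by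
  have hlap (b : OrthonormalBasis (Fin N) ℝ (EuclideanSpace ℝ (Fin N))) :
      ∑ i, dirDeriv (b i) (dirDeriv (b i) f) x = Laplacian.laplacian f x := by
    rw [InnerProductSpace.laplacian_eq_iteratedFDeriv_orthonormalBasis f b]
    refine Finset.sum_congr rfl fun i _ => ?_
    rw [iteratedFDeriv_two_apply, dirDeriv_dirDeriv hf]
    rfl
  rw [hlap b, ← hlap (EuclideanSpace.basisFun (Fin N) ℝ)]
  simp [lap, pd_eq_dirDeriv]

lemma lap_comp_linearIsometryEquiv (hf : ContDiff ℝ ∞ f)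
    (R : EuclideanSpace ℝ (Fin N) ≃ₗᵢ[ℝ] EuclideanSpace ℝ (Fin N))
    (x : EuclideanSpace ℝ (Fin N)) : lap (fun x => f (R x)) x = lap f (R x) := by
  rw [lap_eq_sum_orthonormalBasis hf ((EuclideanSpace.basisFun (Fin N) ℝ).map R)]
  refine Finset.sum_congr rfl fun i _ => ?_
  simp only [pd_eq_dirDeriv]
  rw [dirDeriv_comp_linearIsometryEquiv (hf.differentiable (by simp)),
    dirDeriv_comp_linearIsometryEquiv (differentiable_dirDeriv hf _)]
  simp

end Laplacian

section RadialFunction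

open scoped ContDiff RealInnerProductSpace

variable {E : Type*} [NormedAddCommGroup E] [InnerProductSpace ℝ E] {f : E → ℝ}

/-- `f x` depends on `x` only through `‖x‖`. -/
def IsRadial (f : E → ℝ) : Prop := ∀ ⦃x y⦄, ‖x‖ = ‖y‖ → f x = f y

lemma contDiff_inner_left (e : E) : ContDiff ℝ ∞ fun x : E => ⟪x, e⟫ :=
  contDiff_id.inner ℝ contDiff_const

lemma dirDeriv_inner (a e x : E) : dirDeriv e (fun y => ⟪y, a⟫) x = ⟪e, a⟫ := by
  simp [dirDeriv, fderiv_inner_apply ℝ differentiableAt_fun_id (differentiableAt_const a)]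

lemma dirDeriv_mul_inner (hf : Differentiable ℝ f) (a e x : E) :
    dirDeriv e (fun y => ⟪y, a⟫ * f y) x = ⟪x, a⟫ * dirDeriv e f x + f x * ⟪e, a⟫ := by
  rw [dirDeriv_mul ((contDiff_inner_left a).differentiable (by simp)) hf]
  simp only [dirDeriv_inner]

namespace IsRadial

/-- Reflecting `x + tb` in the line through `x ⊥ b` shows that `t ↦ f (x + tb)` is even. -/
lemma dirDeriv_eq_zero (hr : IsRadial f) (hf : Differentiable ℝ f) {x b : E} (hb : ⟪x, b⟫ = 0) :
    dirDeriv b f x = 0 := by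
  have heven : (fun t : ℝ => f (x + t • -b)) = fun t : ℝ => f (x + t • b) := by
    funext t
    refine hr ((sq_eq_sq₀ (norm_nonneg _) (norm_nonneg _)).1 ?_)
    simp [norm_add_sq_real, inner_smul_right, hb]
  have hderiv := hasDerivAt_comp_line hf x (-b) 0
  rw [heven] at hderiv
  have := hderiv.unique (hasDerivAt_comp_line hf x b 0)
  simp only [dirDeriv, zero_smul, add_zero, map_neg] at this ⊢
  linarith

lemma dirDeriv_zero (hr : IsRadial f) (hf : Differentiable ℝ f) (e : E) : dirDeriv e f 0 = 0 :=
  hr.dirDeriv_eq_zero hf (by simp)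

lemma inner_mul_dirDeriv (hr : IsRadial f) (hf : Differentiable ℝ f) (x a b : E) :
    ⟪x, a⟫ * dirDeriv b f x = ⟪x, b⟫ * dirDeriv a f x := by
  have := hr.dirDeriv_eq_zero hf (x := x) (b := ⟪x, a⟫ • b - ⟪x, b⟫ • a) (by
    simp only [inner_sub_right, inner_smul_right]; ring)
  rw [dirDeriv_sub_dir, dirDeriv_smul_dir, dirDeriv_smul_dir] at this
  linarith

lemma norm_sq_mul_dirDeriv_dirDeriv (hr : IsRadial f) (hf : ContDiff ℝ ∞ f) {x e : E}
    (he : ‖e‖ = 1) (hx : ⟪x, e⟫ = 0) :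
    ‖x‖ ^ 2 * dirDeriv e (dirDeriv e f) x = dirDeriv x f x := by
  have hrel : (fun y => ⟪y, x⟫ * dirDeriv e f y) = fun y => ⟪y, e⟫ * dirDeriv x f y :=
    funext fun y => hr.inner_mul_dirDeriv (hf.differentiable (by simp)) y x e
  have := congrArg (fun g => dirDeriv e g x) hrel
  simp only [dirDeriv_mul_inner (differentiable_dirDeriv hf _), real_inner_self_eq_norm_sq,
    real_inner_comm x e, hx, he] at this
  linarith

lemma dirDeriv_ray_eq (hr : IsRadial f) (hf : Differentiable ℝ f) {e e' : E} (he : ‖e‖ = 1)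
    (he' : ‖e'‖ = 1) (t : ℝ) : dirDeriv e f (t • e) = dirDeriv e' f (t • e') := by
  have hray : (fun t : ℝ => f (t • e)) = fun t : ℝ => f (t • e') :=
    funext fun t => hr (by simp [norm_smul, he, he'])
  exact (hasDerivAt_comp_ray hf e t).unique (hray ▸ hasDerivAt_comp_ray hf e' t)

lemma dirDeriv_dirDeriv_ray_eq (hr : IsRadial f) (hf : ContDiff ℝ ∞ f) {e e' : E} (he : ‖e‖ = 1)
    (he' : ‖e'‖ = 1) (t : ℝ) :
    dirDeriv e (dirDeriv e f) (t • e) = dirDeriv e' (dirDeriv e' f) (t • e') := by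
  have hray : (fun t : ℝ => dirDeriv e f (t • e)) = fun t : ℝ => dirDeriv e' f (t • e') :=
    funext (hr.dirDeriv_ray_eq (hf.differentiable (by simp)) he he')
  exact (hasDerivAt_comp_ray (differentiable_dirDeriv hf e) e t).unique
    (hray ▸ hasDerivAt_comp_ray (differentiable_dirDeriv hf e') e' t)

lemma dirDeriv_self (hr : IsRadial f) (hf : Differentiable ℝ f) {e : E} (he : ‖e‖ = 1) (x : E) :
    dirDeriv x f x = ‖x‖ * dirDeriv e f (‖x‖ • e) := by
  rcases eq_or_ne x 0 with rfl | hx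
  · simp [dirDeriv]
  · have hnorm : ‖x‖ ≠ 0 := norm_ne_zero_iff.2 hx
    have hx' : x = ‖x‖ • ‖x‖⁻¹ • x := by rw [smul_smul, mul_inv_cancel₀ hnorm, one_smul]
    rw [hr.dirDeriv_ray_eq hf he (e' := ‖x‖⁻¹ • x) (by simp [norm_smul, hnorm]), ← hx',
      dirDeriv_smul_dir, ← mul_assoc, mul_inv_cancel₀ hnorm, one_mul]

lemma of_reflection_eq
    (h : ∀ e : E, ‖e‖ = 1 → ∀ x, f ((ℝ ∙ e)ᗮ.reflection x) = f x) : IsRadial f := by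
  intro x y hxy
  rcases eq_or_ne x y with rfl | hne
  · rfl
  have hnorm : ‖x - y‖ ≠ 0 := norm_ne_zero_iff.2 (sub_ne_zero.2 hne)
  have hspan : (ℝ ∙ (‖x - y‖⁻¹ • (x - y))) = ℝ ∙ (x - y) :=
    Submodule.span_singleton_smul_eq (inv_ne_zero hnorm).isUnit _
  have := h (‖x - y‖⁻¹ • (x - y)) (by simp [norm_smul, hnorm]) x
  simp only [hspan, Submodule.reflection_sub hxy] at this
  exact this.symm

end IsRadial

end RadialFunction

section RadialLaplacian

open scoped ContDiff RealInnerProductSpace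

lemma IsRadial.lap_zero {N : ℕ} {f : EuclideanSpace ℝ (Fin N) → ℝ} (hr : IsRadial f)
    (hf : ContDiff ℝ ∞ f) {e : EuclideanSpace ℝ (Fin N)} (he : ‖e‖ = 1) :
    lap f 0 = N * dirDeriv e (dirDeriv e f) 0 := by
  have hterm (i : Fin N) : pd i (pd i f) 0 = dirDeriv e (dirDeriv e f) 0 := by
    simpa [pd_eq_dirDeriv] using
      hr.dirDeriv_dirDeriv_ray_eq hf (e := EuclideanSpace.single i 1) (by simp) he 0
  simp [lap, hterm]

/-- The first coordinate vector of `ℝ^(n+1)`; radial functions are studied along the line that it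
spans. -/
def axis (n : ℕ) : EuclideanSpace ℝ (Fin (n + 1)) := EuclideanSpace.single 0 1

variable {n : ℕ}

@[simp] lemma norm_axis : ‖axis n‖ = 1 := by simp [axis]

lemma norm_smul_axis (r : ℝ) : ‖r • axis n‖ = ‖r‖ := by rw [norm_smul, norm_axis, mul_one]

lemma IsRadial.eq_axis {f : EuclideanSpace ℝ (Fin (n + 1)) → ℝ} (hr : IsRadial f)
    (x : EuclideanSpace ℝ (Fin (n + 1))) : f x = f (‖x‖ • axis n) :=
  hr (by rw [norm_smul_axis, norm_norm])

lemma IsRadial.dirDeriv_dirDeriv_axis {f : EuclideanSpace ℝ (Fin (n + 1)) → ℝ} (hr : IsRadial f)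
    (hf : ContDiff ℝ ∞ f) {t : ℝ} (ht : 0 < t) :
    dirDeriv (axis n) (dirDeriv (axis n) f) (t • axis n) =
      -(n / t * dirDeriv (axis n) f (t • axis n)) + lap f (t • axis n) := by
  have htangential (i : Fin n) :
      pd i.succ (pd i.succ f) (t • axis n) = dirDeriv (axis n) f (t • axis n) / t := by
    have horth : ⟪t • axis n, EuclideanSpace.single i.succ 1⟫ = 0 := by
      rw [inner_smul_left, axis, EuclideanSpace.inner_single_left]
      simp [(Fin.succ_ne_zero i).symm]
    have hsecond := hr.norm_sq_mul_dirDeriv_dirDeriv hf (by simp) horth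
    rw [norm_smul_axis, Real.norm_eq_abs, sq_abs, dirDeriv_smul_dir] at hsecond
    rw [eq_div_iff ht.ne', pd_eq_dirDeriv, pd_eq_dirDeriv]
    exact mul_left_cancel₀ ht.ne' (by linarith)
  have hlap : lap f (t • axis n) = dirDeriv (axis n) (dirDeriv (axis n) f) (t • axis n) +
      n * (dirDeriv (axis n) f (t • axis n) / t) := by
    rw [lap, Fin.sum_univ_succ, Finset.sum_congr rfl fun i _ => htangential i]
    simp [pd_eq_dirDeriv, axis]
  rw [hlap]
  ring

end RadialLaplacian

/-! ### Division by a linear form -/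

section Hadamard

open scoped ContDiff RealInnerProductSpace

lemma hasFDerivAt_intervalIntegral_of_continuous {E : Type*} [NormedAddCommGroup E]
    [NormedSpace ℝ E] [ProperSpace E] {g : E → ℝ → ℝ} {g' : E → ℝ → E →L[ℝ] ℝ}
    (hg : Continuous (Function.uncurry g)) (hg' : Continuous (Function.uncurry g'))
    (hderiv : ∀ x t, HasFDerivAt (fun x => g x t) (g' x t) x) (a b : ℝ) (x₀ : E) :
    HasFDerivAt (fun x => ∫ t in a..b, g x t) (∫ t in a..b, g' x₀ t) x₀ := by
  obtain ⟨M, hM⟩ := ((isCompact_closedBall x₀ 1).prod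
    (isCompact_uIcc (a := a) (b := b))).exists_bound_of_continuousOn hg'.continuousOn
  refine intervalIntegral.hasFDerivAt_integral_of_dominated_of_fderiv_le
    (bound := fun _ => M) (Metric.closedBall_mem_nhds x₀ one_pos)
    (Eventually.of_forall fun x => ?_) ?_ ?_ (Eventually.of_forall fun t ht x hx => ?_)
    (continuous_const.intervalIntegrable _ _)
    (Eventually.of_forall fun t _ x _ => hderiv x t)
  · exact (hg.comp (by fun_prop : Continuous fun t : ℝ => (x, t))).aestronglyMeasurable
  · exact (hg.comp (by fun_prop : Continuous fun t : ℝ => (x₀, t))).intervalIntegrable _ _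
  · exact (hg'.comp (by fun_prop : Continuous fun t : ℝ => (x₀, t))).aestronglyMeasurable
  · exact hM (x, t) ⟨hx, Set.uIoc_subset_uIcc ht⟩

variable {E : Type*} [NormedAddCommGroup E]

lemma contDiff_intervalIntegral [NormedSpace ℝ E] [FiniteDimensional ℝ E] {g : E → ℝ → ℝ}
    (hg : ContDiff ℝ ∞ (Function.uncurry g)) (a b : ℝ) :
    ContDiff ℝ ∞ fun x => ∫ t in a..b, g x t := by
  refine contDiff_infty.2 fun k => ?_
  induction k generalizing g with
  | zero =>
    rw [Nat.cast_zero, contDiff_zero]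
    exact intervalIntegral.continuous_parametric_intervalIntegral_of_continuous' hg.continuous a b
  | succ k ih =>
    set g' : E → ℝ → E →L[ℝ] ℝ := fun x t =>
      (fderiv ℝ (Function.uncurry g) (x, t)).comp (ContinuousLinearMap.inl ℝ E ℝ)
    have hfderiv : ContDiff ℝ ∞ (fderiv ℝ (Function.uncurry g)) := hg.fderiv_right (by simp)
    have hg' : Continuous (Function.uncurry g') :=
      hfderiv.continuous.clm_comp continuous_const
    have hderiv (x : E) (t : ℝ) : HasFDerivAt (fun x => g x t) (g' x t) x := by
      have hslice : HasFDerivAt (fun y : E => (y, t)) (ContinuousLinearMap.inl ℝ E ℝ) x :=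
        hasFDerivAt_prodMk_left x t
      exact HasFDerivAt.comp (g := Function.uncurry g) x
        (hg.differentiable (by simp) (x, t)).hasFDerivAt hslice
    have hint := hasFDerivAt_intervalIntegral_of_continuous hg.continuous hg' hderiv a b
    rw [Nat.cast_succ, contDiff_succ_iff_fderiv_apply]
    refine ⟨fun x => (hint x).differentiableAt, by simp, fun y => ?_⟩
    have happly (x : E) :
        fderiv ℝ (fun x => ∫ t in a..b, g x t) x y = ∫ t in a..b, g' x t y := by
      have hcont : Continuous (g' x) := hg'.comp (by fun_prop : Continuous fun t : ℝ => (x, t))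
      rw [(hint x).fderiv,
        ContinuousLinearMap.intervalIntegral_apply (hcont.intervalIntegrable _ _)]
    simp only [happly]
    exact ih (g := fun x t => g' x t y) (hfderiv.clm_apply contDiff_const)

/-- The quotient is `∫₀¹ ∂ₑf(y + t⟨x, e⟩e) dt`, where `y` is the projection of `x` to `e^⊥`. -/
lemma exists_contDiff_eq_inner_mul [InnerProductSpace ℝ E] [FiniteDimensional ℝ E] {f : E → ℝ}
    (hf : ContDiff ℝ ∞ f) {e : E} (he : ‖e‖ = 1) (hzero : ∀ x, ⟪x, e⟫ = 0 → f x = 0) :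
    ∃ a : E → ℝ, ContDiff ℝ ∞ a ∧ ∀ x, f x = ⟪x, e⟫ * a x := by
  refine ⟨fun x => ∫ t in (0 : ℝ)..1, dirDeriv e f (x - ⟪x, e⟫ • e + t • ⟪x, e⟫ • e), ?_,
    fun x => ?_⟩
  · have hinner : ContDiff ℝ ∞ fun q : E × ℝ => ⟪q.1, e⟫ :=
      (contDiff_inner_left e).comp contDiff_fst
    have hpath : ContDiff ℝ ∞ fun q : E × ℝ => q.1 - ⟪q.1, e⟫ • e + q.2 • ⟪q.1, e⟫ • e := by
      fun_prop
    exact contDiff_intervalIntegral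
      (g := fun x t => dirDeriv e f (x - ⟪x, e⟫ • e + t • ⟪x, e⟫ • e))
      ((contDiff_dirDeriv hf e).comp hpath) 0 1
  · set y := x - ⟪x, e⟫ • e with hy
    have hfy : f y = 0 := hzero y (by
      rw [hy, inner_sub_left, real_inner_smul_left, real_inner_self_eq_norm_sq, he]; ring)
    have hcont : Continuous fun t : ℝ => dirDeriv (⟪x, e⟫ • e) f (y + t • ⟪x, e⟫ • e) :=
      (continuous_dirDeriv hf _).comp (by fun_prop)
    have hftc := intervalIntegral.integral_eq_sub_of_hasDerivAt
      (fun t _ => hasDerivAt_comp_line (hf.differentiable (by simp)) y (⟪x, e⟫ • e) t)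
      (hcont.intervalIntegrable 0 1)
    simp only [dirDeriv_smul_dir, intervalIntegral.integral_const_mul, zero_smul, add_zero,
      one_smul, hfy, sub_zero] at hftc
    rw [hftc, hy, sub_add_cancel]

end Hadamard

/-! ### A Liouville theorem -/

section Liouville

open scoped ContDiff

variable {N : ℕ} {f ψ Q χ : EuclideanSpace ℝ (Fin N) → ℝ}

lemma gradsq_nonneg (f : EuclideanSpace ℝ (Fin N) → ℝ) (x : EuclideanSpace ℝ (Fin N)) :
    0 ≤ gradsq f x :=
  Finset.sum_nonneg fun _ _ => sq_nonneg _

lemma continuous_pd (hf : ContDiff ℝ ∞ f) (i : Fin N) : Continuous (pd i f) :=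
  continuous_dirDeriv hf _

lemma pd_mul {g : EuclideanSpace ℝ (Fin N) → ℝ} (hf : Differentiable ℝ f)
    (hg : Differentiable ℝ g) (i : Fin N) :
    pd i (fun y => f y * g y) = fun y => f y * pd i g y + g y * pd i f y :=
  dirDeriv_mul hf hg _

lemma continuous_gradsq (hf : ContDiff ℝ ∞ f) : Continuous (gradsq f) :=
  continuous_finsetSum _ fun i _ => (continuous_pd hf i).pow 2

lemma hasCompactSupport_gradsq (hf : HasCompactSupport f) : HasCompactSupport (gradsq f) :=
  (hf.fderiv ℝ).mono fun x hx hzero => hx (by simp [gradsq, pd, hzero])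

lemma gradsq_comp_smul (hf : Differentiable ℝ f) (c : ℝ) (x : EuclideanSpace ℝ (Fin N)) :
    gradsq (fun y => f (c • y)) x = c ^ 2 * gradsq f (c • x) := by
  have hscale : HasFDerivAt (fun y => c • y)
      (c • ContinuousLinearMap.id ℝ (EuclideanSpace ℝ (Fin N))) x :=
    (hasFDerivAt_id x).const_smul c
  have hpd (i : Fin N) : pd i (fun y => f (c • y)) x = c * pd i f (c • x) := by
    have hcomp : fderiv ℝ (fun y => f (c • y)) x = (fderiv ℝ f (c • x)).comp _ :=
      ((hf (c • x)).hasFDerivAt.comp x hscale).fderiv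
    simp [pd, hcomp]
  simp only [gradsq, hpd, mul_pow, Finset.mul_sum]

lemma exists_cutoff (N : ℕ) :
    ∃ K : ℝ, ∀ R > 0, ∃ χ : EuclideanSpace ℝ (Fin N) → ℝ, ContDiff ℝ ∞ χ ∧ HasCompactSupport χ ∧
      (∀ x, ‖x‖ ≤ R → χ x = 1) ∧ ∀ x, gradsq χ x ≤ K / R ^ 2 := by
  let bump : ContDiffBump (0 : EuclideanSpace ℝ (Fin N)) := ⟨1, 2, one_pos, one_lt_two⟩
  have hsmooth : ContDiff ℝ ∞ bump := bump.contDiff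
  obtain ⟨K, hK⟩ := (continuous_gradsq hsmooth).bounded_above_of_compact_support
    (hasCompactSupport_gradsq bump.hasCompactSupport)
  refine ⟨K, fun R hR => ⟨fun x => bump (R⁻¹ • x), hsmooth.comp (contDiff_const_smul _),
    bump.hasCompactSupport.comp_homeomorph (Homeomorph.smulOfNeZero R⁻¹ (inv_ne_zero hR.ne')),
    fun x hx => bump.one_of_mem_closedBall ?_, fun x => ?_⟩⟩
  · rw [mem_closedBall_zero_iff, norm_smul, norm_inv, Real.norm_of_nonneg hR.le]
    exact (inv_mul_le_iff₀ hR).2 (hx.trans_eq (mul_one R).symm)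
  · rw [gradsq_comp_smul (hsmooth.differentiable (by simp)), inv_pow, mul_comm, ← div_eq_mul_inv]
    exact div_le_div_of_nonneg_right ((le_abs_self _).trans (hK _)) (sq_nonneg R)

lemma integral_sum_mul_pd {F : Fin N → EuclideanSpace ℝ (Fin N) → ℝ}
    (hF : ∀ i, ContDiff ℝ ∞ (F i)) (hf : ContDiff ℝ ∞ f) (hc : HasCompactSupport f) :
    ∫ x, ∑ i, F i x * pd i f x = -∫ x, (∑ i, pd i (F i) x) * f x := by
  have hleft (i : Fin N) : Integrable fun x => F i x * pd i f x :=
    ((hF i).continuous.mul (continuous_pd hf i)).integrable_of_hasCompactSupport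
      (HasCompactSupport.mul_left (hc.fderiv_apply ℝ _))
  have hright (i : Fin N) : Integrable fun x => pd i (F i) x * f x :=
    ((continuous_pd (hF i) i).mul hf.continuous).integrable_of_hasCompactSupport hc.mul_left
  have hparts (i : Fin N) : ∫ x, F i x * pd i f x = -∫ x, pd i (F i) x * f x :=
    integral_mul_fderiv_eq_neg_fderiv_mul_of_integrable (hright i) (hleft i)
      (((hF i).continuous.mul hf.continuous).integrable_of_hasCompactSupport hc.mul_left)
      (fun x _ => (hF i).differentiable (by simp) x) (fun x _ => hf.differentiable (by simp) x)
  simp only [Finset.sum_mul]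
  rw [integral_finsetSum _ fun i _ => hleft i, integral_finsetSum _ fun i _ => hright i,
    Finset.sum_congr rfl fun i _ => hparts i, Finset.sum_neg_distrib]

lemma sum_pd_sq_mul_pd (hψ : ContDiff ℝ ∞ ψ) (hQ : ContDiff ℝ ∞ Q)
    (x : EuclideanSpace ℝ (Fin N)) :
    ∑ i, pd i (fun y => ψ y * (ψ y * pd i Q y)) x =
      ψ x * (lap (fun y => ψ y * Q y) x - Q x * lap ψ x) := by
  have hψd := hψ.differentiable (by simp)
  have hterm (i : Fin N) : pd i (fun y => ψ y * (ψ y * pd i Q y)) x =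
      ψ x * (ψ x * pd i (pd i Q) x + 2 * (pd i ψ x * pd i Q x)) := by
    have hQd : Differentiable ℝ (pd i Q) := differentiable_dirDeriv hQ _
    simp only [pd_mul hψd (hψd.fun_mul hQd), pd_mul hψd hQd]
    ring
  rw [Finset.sum_congr rfl fun i _ => hterm i, lap_mul hψ hQ, ← Finset.mul_sum,
    Finset.sum_add_distrib, ← Finset.mul_sum, ← Finset.mul_sum, lap]
  ring

lemma sq_mul_gradsq_le_sum_mul_pd (hχ : Differentiable ℝ χ) (hQ : Differentiable ℝ Q)
    (ψ : EuclideanSpace ℝ (Fin N) → ℝ) (x : EuclideanSpace ℝ (Fin N)) :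
    1 / 2 * (χ x ^ 2 * (ψ x ^ 2 * gradsq Q x)) - 2 * ((ψ x * Q x) ^ 2 * gradsq χ x) ≤
      ∑ i, ψ x * (ψ x * pd i Q x) * pd i (fun y => χ y * (χ y * Q y)) x := by
  simp only [gradsq, Finset.mul_sum, ← Finset.sum_sub_distrib]
  refine Finset.sum_le_sum fun i _ => ?_
  simp only [pd_mul hχ (hχ.fun_mul hQ), pd_mul hχ hQ]
  linarith [sq_nonneg (χ x * (ψ x * pd i Q x) + 2 * (ψ x * Q x * pd i χ x))]

/-- Caccioppoli's inequality: test `div (ψ²∇Q) = 0` against `χ²Q`. -/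
lemma integral_sq_mul_gradsq_le (hψ : ContDiff ℝ ∞ ψ) (hQ : ContDiff ℝ ∞ Q)
    (hlap : ∀ x, ψ x * lap (fun y => ψ y * Q y) x = ψ x * (Q x * lap ψ x))
    (hχ : ContDiff ℝ ∞ χ) (hc : HasCompactSupport χ) :
    ∫ x, χ x ^ 2 * (ψ x ^ 2 * gradsq Q x) ≤ 4 * ∫ x, (ψ x * Q x) ^ 2 * gradsq χ x := by
  have hF (i : Fin N) : ContDiff ℝ ∞ fun y => ψ y * (ψ y * pd i Q y) :=
    hψ.mul (hψ.mul (contDiff_dirDeriv hQ _))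
  have htest : ContDiff ℝ ∞ fun y => χ y * (χ y * Q y) := hχ.mul (hχ.mul hQ)
  have htest_supp : HasCompactSupport fun y => χ y * (χ y * Q y) := hc.mul_right
  have hzero : ∫ x, ∑ i, ψ x * (ψ x * pd i Q x) * pd i (fun y => χ y * (χ y * Q y)) x = 0 := by
    rw [integral_sum_mul_pd hF htest htest_supp]
    simp [sum_pd_sq_mul_pd hψ hQ, mul_sub, hlap]
  have hsq_supp : HasCompactSupport fun x => χ x ^ 2 :=
    hc.comp_left (g := fun t => t ^ 2) (by simp)
  have hleft : Integrable fun x => χ x ^ 2 * (ψ x ^ 2 * gradsq Q x) :=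
    ((hχ.continuous.pow 2).mul ((hψ.continuous.pow 2).mul
      (continuous_gradsq hQ))).integrable_of_hasCompactSupport hsq_supp.mul_right
  have hright : Integrable fun x => (ψ x * Q x) ^ 2 * gradsq χ x :=
    (((hψ.mul hQ).continuous.pow 2).mul (continuous_gradsq hχ)).integrable_of_hasCompactSupport
      (hasCompactSupport_gradsq hc).mul_left
  have hflux : Integrable fun x =>
      ∑ i, ψ x * (ψ x * pd i Q x) * pd i (fun y => χ y * (χ y * Q y)) x :=
    integrable_finsetSum _ fun i _ =>
      ((hF i).continuous.mul (continuous_pd htest i)).integrable_of_hasCompactSupport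
        (HasCompactSupport.mul_left (htest_supp.fderiv_apply ℝ _))
  have hmono := integral_mono ((hleft.const_mul (1 / 2)).sub (hright.const_mul 2)) hflux
    fun x => sq_mul_gradsq_le_sum_mul_pd (hχ.differentiable (by simp))
      (hQ.differentiable (by simp)) ψ x
  rw [hzero, integral_sub' (hleft.const_mul _) (hright.const_mul _), integral_const_mul,
    integral_const_mul] at hmono
  linarith

lemma setIntegral_ball_sq_mul_gradsq_le {K R r : ℝ} (hψ : ContDiff ℝ ∞ ψ) (hQ : ContDiff ℝ ∞ Q)
    (hlap : ∀ x, ψ x * lap (fun y => ψ y * Q y) x = ψ x * (Q x * lap ψ x))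
    (hint : Integrable fun x => (ψ x * Q x) ^ 2) (hχ : ContDiff ℝ ∞ χ)
    (hc : HasCompactSupport χ) (hone : ∀ x, ‖x‖ ≤ R → χ x = 1)
    (hgrad : ∀ x, gradsq χ x ≤ K / R ^ 2) (hrR : r ≤ R) :
    ∫ x in Metric.ball 0 r, ψ x ^ 2 * gradsq Q x ≤
      4 * (∫ x, (ψ x * Q x) ^ 2 * K) / R ^ 2 := by
  have hcont : Continuous fun x => χ x ^ 2 * (ψ x ^ 2 * gradsq Q x) :=
    (hχ.continuous.pow 2).mul ((hψ.continuous.pow 2).mul (continuous_gradsq hQ))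
  have hsq_supp : HasCompactSupport fun x => χ x ^ 2 :=
    hc.comp_left (g := fun t => t ^ 2) (by simp)
  calc ∫ x in Metric.ball 0 r, ψ x ^ 2 * gradsq Q x
      = ∫ x in Metric.ball 0 r, χ x ^ 2 * (ψ x ^ 2 * gradsq Q x) := by
        refine setIntegral_congr_fun measurableSet_ball fun x hx => ?_
        simp only [hone x ((mem_ball_zero_iff.1 hx).le.trans hrR), one_pow, one_mul]
    _ ≤ ∫ x, χ x ^ 2 * (ψ x ^ 2 * gradsq Q x) :=
        setIntegral_le_integral (hcont.integrable_of_hasCompactSupport hsq_supp.mul_right)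
          (ae_of_all _ fun x => mul_nonneg (sq_nonneg _)
            (mul_nonneg (sq_nonneg _) (gradsq_nonneg Q x)))
    _ ≤ 4 * ∫ x, (ψ x * Q x) ^ 2 * gradsq χ x := integral_sq_mul_gradsq_le hψ hQ hlap hχ hc
    _ ≤ 4 * ∫ x, (ψ x * Q x) ^ 2 * K / R ^ 2 := by
        gcongr
        · exact (((hψ.mul hQ).continuous.pow 2).mul
            (continuous_gradsq hχ)).integrable_of_hasCompactSupport
              (hasCompactSupport_gradsq hc).mul_left
        · exact (hint.mul_const K).div_const _
        · intro x
          simp only [mul_div_assoc]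
          exact mul_le_mul_of_nonneg_left (hgrad x) (sq_nonneg _)
    _ = 4 * (∫ x, (ψ x * Q x) ^ 2 * K) / R ^ 2 := by rw [integral_div, mul_div_assoc]

theorem mul_pd_eq_zero_of_lap_mul_eq (hψ : ContDiff ℝ ∞ ψ) (hQ : ContDiff ℝ ∞ Q)
    (hlap : ∀ x, ψ x * lap (fun y => ψ y * Q y) x = ψ x * (Q x * lap ψ x))
    (hint : Integrable fun x => (ψ x * Q x) ^ 2) (x : EuclideanSpace ℝ (Fin N)) (i : Fin N) :
    ψ x * pd i Q x = 0 := by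
  set r := ‖x‖ + 1
  have hcont : Continuous fun y => ψ y ^ 2 * gradsq Q y :=
    (hψ.continuous.pow 2).mul (continuous_gradsq hQ)
  have hnonneg (y : EuclideanSpace ℝ (Fin N)) : 0 ≤ ψ y ^ 2 * gradsq Q y :=
    mul_nonneg (sq_nonneg _) (gradsq_nonneg Q y)
  obtain ⟨K, hK⟩ := exists_cutoff N
  have hbound : ∀ᶠ R in atTop, ∫ y in Metric.ball 0 r, ψ y ^ 2 * gradsq Q y ≤
      4 * (∫ y, (ψ y * Q y) ^ 2 * K) / R ^ 2 := by
    filter_upwards [eventually_gt_atTop 0, eventually_ge_atTop r] with R hR hrR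
    obtain ⟨χ, hχ, hc, hone, hgrad⟩ := hK R hR
    exact setIntegral_ball_sq_mul_gradsq_le hψ hQ hlap hint hχ hc hone hgrad hrR
  have hzero : ∫ y in Metric.ball 0 r, ψ y ^ 2 * gradsq Q y = 0 :=
    le_antisymm (ge_of_tendsto ((tendsto_pow_atTop two_ne_zero).const_div_atTop _) hbound)
      (integral_nonneg hnonneg)
  have hae := (setIntegral_eq_zero_iff_of_nonneg_ae (ae_of_all _ hnonneg)
    (hcont.locallyIntegrable.integrableOn_isCompact (isCompact_closedBall 0 r)
      |>.mono_set Metric.ball_subset_closedBall)).1 hzero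
  have hx : ψ x ^ 2 * gradsq Q x = 0 :=
    Measure.eqOn_open_of_ae_eq hae Metric.isOpen_ball hcont.continuousOn continuousOn_const
      (by simp [r])
  rw [gradsq, Finset.mul_sum, Finset.sum_eq_zero_iff_of_nonneg fun _ _ => by positivity] at hx
  simpa using hx i (Finset.mem_univ i)

end Liouville

/-! ### Removing the non-radial part of a kernel element -/

section Reflection

open scoped ContDiff RealInnerProductSpace

/-- A smooth radial function whose radial derivative vanishes only at the origin, and only to
first order there. -/
structure IsNondegenerateRadial {E : Type*} [NormedAddCommGroup E] [InnerProductSpace ℝ E]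
    (w : E → ℝ) : Prop where
  smooth : ContDiff ℝ ∞ w
  radial : IsRadial w
  dirDeriv_self_ne_zero : ∀ ⦃x⦄, x ≠ 0 → dirDeriv x w x ≠ 0
  dirDeriv_dirDeriv_zero_ne_zero : ∀ ⦃e⦄, ‖e‖ = 1 → dirDeriv e (dirDeriv e w) 0 ≠ 0

lemma dense_inner_ne_zero {E : Type*} [NormedAddCommGroup E] [InnerProductSpace ℝ E] {e : E}
    (he : e ≠ 0) : Dense {x : E | ⟪x, e⟫ ≠ 0} := by
  have hopen : IsOpenMap (innerSL ℝ e) :=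
    (innerSL ℝ e).isOpenMap_of_ne_zero (norm_ne_zero_iff.1 (by simpa using he))
  simpa only [Set.preimage, Set.mem_compl_iff, Set.mem_singleton_iff, innerSL_apply_apply,
    real_inner_comm] using (dense_compl_singleton (0 : ℝ)).preimage hopen

namespace IsNondegenerateRadial

section InnerProductSpace

variable {E : Type*} [NormedAddCommGroup E] [InnerProductSpace ℝ E] {w : E → ℝ} {e : E}

lemma dirDeriv_ne_zero (hw : IsNondegenerateRadial w) {x : E} (hx : ⟪x, e⟫ ≠ 0) :
    dirDeriv e w x ≠ 0 := by
  intro hzero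
  have hx₀ : x ≠ 0 := by
    rintro rfl
    simp at hx
  have hrel := hw.radial.inner_mul_dirDeriv (hw.smooth.differentiable (by simp)) x x e
  rw [hzero, mul_zero] at hrel
  exact mul_ne_zero hx (hw.dirDeriv_self_ne_zero hx₀) hrel.symm

lemma dirDeriv_dirDeriv_ne_zero (hw : IsNondegenerateRadial w) (he : ‖e‖ = 1) {x : E}
    (hx : ⟪x, e⟫ = 0) : dirDeriv e (dirDeriv e w) x ≠ 0 := by
  rcases eq_or_ne x 0 with rfl | hx₀
  · exact hw.dirDeriv_dirDeriv_zero_ne_zero he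
  · have hself := hw.dirDeriv_self_ne_zero hx₀
    rw [← hw.radial.norm_sq_mul_dirDeriv_dirDeriv hw.smooth he hx] at hself
    exact right_ne_zero_of_mul hself

lemma exists_dirDeriv_eq_inner_mul [FiniteDimensional ℝ E] (hw : IsNondegenerateRadial w)
    (he : ‖e‖ = 1) :
    ∃ m : E → ℝ, ContDiff ℝ ∞ m ∧ (∀ x, m x ≠ 0) ∧ ∀ x, dirDeriv e w x = ⟪x, e⟫ * m x := by
  obtain ⟨m, hm, hfactor⟩ := exists_contDiff_eq_inner_mul (contDiff_dirDeriv hw.smooth e) he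
    fun x hx => hw.radial.dirDeriv_eq_zero (hw.smooth.differentiable (by simp)) hx
  refine ⟨m, hm, fun x => ?_, hfactor⟩
  by_cases hx : ⟪x, e⟫ = 0
  · have hsecond := hw.dirDeriv_dirDeriv_ne_zero he hx
    rw [funext hfactor, dirDeriv_mul_inner (hm.differentiable (by simp)),
      real_inner_self_eq_norm_sq, he, hx] at hsecond
    simpa using hsecond
  · exact right_ne_zero_of_mul (hfactor x ▸ hw.dirDeriv_ne_zero hx)

end InnerProductSpace

variable {N : ℕ} {w V z Z : EuclideanSpace ℝ (Fin N) → ℝ} {e : EuclideanSpace ℝ (Fin N)}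

/-- The quotient `Q = z / ∂ₑw` extends smoothly across `e^⊥`, and the Liouville theorem makes it
constant. -/
lemma exists_eq_const_mul_dirDeriv (hw : IsNondegenerateRadial w) (he : ‖e‖ = 1)
    (hlapw : ∀ x, lap (dirDeriv e w) x = -(V x * dirDeriv e w x)) (hz : ContDiff ℝ ∞ z)
    (hzero : ∀ x, ⟪x, e⟫ = 0 → z x = 0) (hlap : ∀ x, lap z x = -(V x * z x))
    (hint : MemLp z 2) : ∃ c : ℝ, ∀ x, z x = c * dirDeriv e w x := by
  obtain ⟨a, ha, hza⟩ := exists_contDiff_eq_inner_mul hz he hzero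
  obtain ⟨m, hm, hm₀, hwm⟩ := hw.exists_dirDeriv_eq_inner_mul he
  set Q : EuclideanSpace ℝ (Fin N) → ℝ := fun x => a x / m x
  have hQ : ContDiff ℝ ∞ Q := ha.div hm hm₀
  have hzQ : z = fun x => dirDeriv e w x * Q x := by
    funext x
    rw [hza, hwm, mul_assoc, mul_div_cancel₀ _ (hm₀ x)]
  have hliouville := mul_pd_eq_zero_of_lap_mul_eq (contDiff_dirDeriv hw.smooth e) hQ
    (fun x => by rw [← hzQ, hlap, hlapw, hzQ]; ring) (by simpa only [hzQ] using hint.integrable_sq)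
  have he₀ : e ≠ 0 := norm_ne_zero_iff.1 (he ▸ one_ne_zero)
  have hpd (i : Fin N) : pd i Q = 0 :=
    (continuous_pd hQ i).ext_on (dense_inner_ne_zero he₀) continuous_const fun x hx =>
      (mul_eq_zero.1 (hliouville x i)).resolve_left (hw.dirDeriv_ne_zero hx)
  have hfderiv (x : EuclideanSpace ℝ (Fin N)) : fderiv ℝ Q x = 0 := by
    ext y
    exact (dirDeriv_eq_sum_pd y Q x).trans (by simp [hpd])
  refine ⟨Q 0, fun x => ?_⟩
  have hconst := is_const_of_fderiv_eq_zero (hQ.differentiable (by simp)) hfderiv x 0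
  simp only [hzQ, hconst, mul_comm]

lemma sub_reflection_eq (hw : IsNondegenerateRadial w) (he : ‖e‖ = 1)
    (hlapw : ∀ x, lap (dirDeriv e w) x = -(V x * dirDeriv e w x)) (hV : IsRadial V)
    (hZ : ContDiff ℝ ∞ Z) (hlap : ∀ x, lap Z x = -(V x * Z x)) (hint : MemLp Z 2)
    (x : EuclideanSpace ℝ (Fin N)) :
    Z x - Z ((ℝ ∙ e)ᗮ.reflection x) =
      2 * dirDeriv e Z 0 / dirDeriv e (dirDeriv e w) 0 * dirDeriv e w x := by
  set R := (ℝ ∙ e)ᗮ.reflection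
  have hZR : ContDiff ℝ ∞ fun y => Z (R y) := contDiff_comp_linearIsometryEquiv hZ R
  have hlap_odd (y : EuclideanSpace ℝ (Fin N)) :
      lap (fun y => Z y - Z (R y)) y = -(V y * (Z y - Z (R y))) := by
    rw [lap_sub hZ hZR, lap_comp_linearIsometryEquiv hZ, hlap, hlap,
      hV (R.norm_map y)]
    ring
  have hzero (y : EuclideanSpace ℝ (Fin N)) (hy : ⟪y, e⟫ = 0) : Z y - Z (R y) = 0 := by
    rw [Submodule.reflection_mem_subspace_eq_self
      (Submodule.mem_orthogonal_singleton_iff_inner_left.2 hy), sub_self]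
  obtain ⟨c, hc⟩ := hw.exists_eq_const_mul_dirDeriv he hlapw (hZ.sub hZR) hzero hlap_odd
    (hint.sub (hint.comp_measurePreserving R.measurePreserving))
  have hderiv : 2 * dirDeriv e Z 0 = c * dirDeriv e (dirDeriv e w) 0 := by
    have hodd := congrArg (fun g => dirDeriv e g 0) (funext hc)
    simp only [dirDeriv_sub (hZ.differentiable (by simp)) (hZR.differentiable (by simp)),
      dirDeriv_comp_linearIsometryEquiv (hZ.differentiable (by simp)), R,
      Submodule.reflection_orthogonalComplement_singleton_eq_neg,
      dirDeriv_mul (differentiable_const c) (differentiable_dirDeriv hw.smooth e)] at hodd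
    simp only [dirDeriv, map_zero, map_neg, fderiv_const_apply, zero_apply, mul_zero] at hodd ⊢
    linarith
  rw [hc, hderiv, mul_div_cancel_right₀ _ (hw.dirDeriv_dirDeriv_zero_ne_zero he)]

end IsNondegenerateRadial

lemma IsRadial.dirDeriv_reflection {E : Type*} [NormedAddCommGroup E] [InnerProductSpace ℝ E]
    {w : E → ℝ} (hr : IsRadial w) (hw : Differentiable ℝ w) {e : E} (he : ‖e‖ = 1) (b x : E) :
    dirDeriv b w ((ℝ ∙ e)ᗮ.reflection x) = dirDeriv b w x - 2 * ⟪b, e⟫ * dirDeriv e w x := by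
  have hreflect : (ℝ ∙ e)ᗮ.reflection b = b - (2 * ⟪b, e⟫) • e := by
    rw [Submodule.reflection_orthogonal_apply, Submodule.reflection_singleton_apply, he]
    simp only [RCLike.ofReal_one, one_pow, div_one, real_inner_comm]
    module
  have hcomp := congrFun (dirDeriv_comp_linearIsometryEquiv hw (ℝ ∙ e)ᗮ.reflection
    ((ℝ ∙ e)ᗮ.reflection b)) x
  rw [Submodule.reflection_reflection] at hcomp
  have hinv : (fun x => w ((ℝ ∙ e)ᗮ.reflection x)) = w :=
    funext fun x => hr (LinearIsometryEquiv.norm_map _ x)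
  rw [← hcomp, hinv, hreflect, dirDeriv_sub_dir, dirDeriv_smul_dir]

/-- The vector `b` is chosen so that `Z - ∂_b w` is invariant under reflections in hyperplanes. -/
theorem IsNondegenerateRadial.exists_isRadial_sub_dirDeriv {n : ℕ}
    {w V Z : EuclideanSpace ℝ (Fin (n + 1)) → ℝ} (hw : IsNondegenerateRadial w)
    (hlapw : ∀ e x, lap (dirDeriv e w) x = -(V x * dirDeriv e w x)) (hV : IsRadial V)
    (hZ : ContDiff ℝ ∞ Z) (hlap : ∀ x, lap Z x = -(V x * Z x)) (hint : MemLp Z 2) :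
    ∃ b, IsRadial fun x => Z x - dirDeriv b w x := by
  set k := dirDeriv (axis n) (dirDeriv (axis n) w) 0
  set b := k⁻¹ • (InnerProductSpace.toDual ℝ _).symm (fderiv ℝ Z 0)
  refine ⟨b, IsRadial.of_reflection_eq fun e he x => ?_⟩
  have hk : dirDeriv e (dirDeriv e w) 0 = k := by
    simpa using hw.radial.dirDeriv_dirDeriv_ray_eq hw.smooth he norm_axis 0
  have hb : ⟪b, e⟫ = k⁻¹ * dirDeriv e Z 0 := by
    rw [real_inner_smul_left, InnerProductSpace.toDual_symm_apply, dirDeriv]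
  have hodd := hw.sub_reflection_eq he (hlapw e) hV hZ hlap hint x
  rw [hw.radial.dirDeriv_reflection (hw.smooth.differentiable (by simp)) he, hb]
  rw [hk, div_eq_inv_mul] at hodd
  linarith

end Reflection

/-! ### Square-integrable functions with square-integrable gradient -/

section SobolevSpace

open scoped ContDiff

/-- Membership in `H¹(ℝ^N)`, for functions whose weak derivatives are their classical ones. -/
structure MemH1 {N : ℕ} (f : EuclideanSpace ℝ (Fin N) → ℝ) : Prop where
  memLp : MemLp f 2
  memLp_pd (i : Fin N) : MemLp (pd i f) 2

lemma ExpDecay.memLp_two {E : Type*} [NormedAddCommGroup E] [NormedSpace ℝ E]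
    [FiniteDimensional ℝ E] [MeasurableSpace E] [BorelSpace E] {μ : Measure E}
    [μ.IsAddHaarMeasure] {f : E → ℝ} (hf : ExpDecay f) (hcont : Continuous f) : MemLp f 2 μ :=
  (memLp_two_iff_integrable_sq hcont.aestronglyMeasurable).2 (hf.sq.integrable (hcont.pow 2))

lemma memLp_two_bdd_mul {E : Type*} [TopologicalSpace E] [MeasurableSpace E]
    [OpensMeasurableSpace E] {μ : Measure E} {f g : E → ℝ} (hf : MemLp f 2 μ) (hg : Continuous g)
    (hbdd : ∃ K, ∀ x, ‖g x‖ ≤ K) : MemLp (fun x => g x * f x) 2 μ := by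
  obtain ⟨K, hK⟩ := hbdd
  refine hf.of_le_mul (c := K) (hg.aestronglyMeasurable.mul hf.1) (.of_forall fun x => ?_)
  rw [norm_mul]
  gcongr
  exact hK x

namespace MemH1

variable {N : ℕ} {f g : EuclideanSpace ℝ (Fin N) → ℝ}

lemma of_integrable (hf : ContDiff ℝ ∞ f) (hint : Integrable fun x => f x ^ 2 + gradsq f x) :
    MemH1 f where
  memLp := by
    refine (memLp_two_iff_integrable_sq hf.continuous.aestronglyMeasurable).2
      (hint.mono' (hf.continuous.pow 2).aestronglyMeasurable (.of_forall fun x => ?_))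
    rw [Real.norm_of_nonneg (sq_nonneg _)]
    exact le_add_of_nonneg_right (gradsq_nonneg f x)
  memLp_pd i := by
    refine (memLp_two_iff_integrable_sq (continuous_pd hf i).aestronglyMeasurable).2
      (hint.mono' ((continuous_pd hf i).pow 2).aestronglyMeasurable (.of_forall fun x => ?_))
    rw [Real.norm_of_nonneg (sq_nonneg _)]
    exact (sq_dirDeriv_le_gradsq (by simp) f x).trans (le_add_of_nonneg_left (sq_nonneg _))

lemma sub (hf : MemH1 f) (hg : MemH1 g) (hdf : Differentiable ℝ f) (hdg : Differentiable ℝ g) :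
    MemH1 fun x => f x - g x where
  memLp := hf.memLp.sub hg.memLp
  memLp_pd i := by
    rw [pd_eq_dirDeriv, dirDeriv_sub hdf hdg]
    exact (hf.memLp_pd i).sub (hg.memLp_pd i)

lemma bdd_mul (hf : MemH1 f) (hdf : Differentiable ℝ f) (hg : ContDiff ℝ ∞ g)
    (hbdd : ∃ K, ∀ x, ‖g x‖ ≤ K) (hbdd' : ∀ i, ∃ K, ∀ x, ‖pd i g x‖ ≤ K) :
    MemH1 fun x => g x * f x where
  memLp := memLp_two_bdd_mul hf.memLp hg.continuous hbdd
  memLp_pd i := by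
    rw [pd_eq_dirDeriv, dirDeriv_mul (hg.differentiable (by simp)) hdf]
    simp only [mul_comm (f _)]
    exact (memLp_two_bdd_mul (hf.memLp_pd i) hg.continuous hbdd).add
      (memLp_two_bdd_mul hf.memLp (continuous_pd hg i) (hbdd' i))

lemma integrable_sq_add_gradsq (hf : MemH1 f) : Integrable fun x => f x ^ 2 + gradsq f x :=
  hf.memLp.integrable_sq.add (integrable_finsetSum _ fun i _ => (hf.memLp_pd i).integrable_sq)

end MemH1

lemma IsRadial.sq_dirDeriv_axis_le_gradsq {n : ℕ} {f : EuclideanSpace ℝ (Fin (n + 1)) → ℝ}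
    (hr : IsRadial f) (hf : Differentiable ℝ f) (x : EuclideanSpace ℝ (Fin (n + 1))) :
    dirDeriv (axis n) f (‖x‖ • axis n) ^ 2 ≤ gradsq f x := by
  rcases eq_or_ne x 0 with rfl | hx
  · rw [norm_zero, zero_smul]
    exact sq_dirDeriv_le_gradsq norm_axis f 0
  · have hnorm : ‖x‖ ≠ 0 := norm_ne_zero_iff.2 hx
    have hunit : ‖‖x‖⁻¹ • x‖ = 1 := by simp [norm_smul, hnorm]
    rw [hr.dirDeriv_ray_eq hf norm_axis hunit, smul_inv_smul₀ hnorm]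
    exact sq_dirDeriv_le_gradsq hunit f x

lemma IsRadial.integrableOn_Ioi {n : ℕ} {f : EuclideanSpace ℝ (Fin (n + 1)) → ℝ}
    (hr : IsRadial f) (hf : ContDiff ℝ ∞ f) (hH1 : MemH1 f) :
    IntegrableOn (fun r : ℝ =>
      r ^ n * (f (r • axis n) ^ 2 + dirDeriv (axis n) f (r • axis n) ^ 2)) (Set.Ioi 0) := by
  set F : ℝ → ℝ := fun r => f (r • axis n) ^ 2 + dirDeriv (axis n) f (r • axis n) ^ 2
  have hF : Continuous F := by
    have := hf.continuous
    have := continuous_dirDeriv hf (axis n)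
    fun_prop
  have hint : Integrable fun x : EuclideanSpace ℝ (Fin (n + 1)) => F ‖x‖ := by
    refine hH1.integrable_sq_add_gradsq.mono' (hF.comp continuous_norm).aestronglyMeasurable
      (.of_forall fun x => ?_)
    rw [Real.norm_of_nonneg (by positivity), hr.eq_axis x]
    exact add_le_add_right (hr.sq_dirDeriv_axis_le_gradsq (hf.differentiable (by simp)) x) _
  simpa using (integrable_fun_norm_addHaar volume (f := F)).1 hint

end SobolevSpace

/-! ### The dual profile of a ground state -/

section DualProfile

variable {N : ℕ} {ω p : ℝ} {u v : EuclideanSpace ℝ (Fin N) → ℝ}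

/-- The function `u` expressed in the dual variable, in which the quasilinear equation becomes
semilinear. -/
def dualProfile (u : EuclideanSpace ℝ (Fin N) → ℝ) (x : EuclideanSpace ℝ (Fin N)) : ℝ :=
  dualMap (u x)

lemma dirDeriv_dualProfile (hu : Differentiable ℝ u) (e : EuclideanSpace ℝ (Fin N)) :
    dirDeriv e (dualProfile u) = fun x => dualWeight (u x) * dirDeriv e u x :=
  funext fun x => dirDeriv_comp (hasDerivAt_dualMap (u x)) (hu x) e

lemma dirDeriv_dualWeight_comp (hu : Differentiable ℝ u) (e : EuclideanSpace ℝ (Fin N)) :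
    dirDeriv e (fun x => dualWeight (u x)) =
      fun x => 2 * u x / dualWeight (u x) * dirDeriv e u x :=
  funext fun x => dirDeriv_comp (hasDerivAt_dualWeight (u x)) (hu x) e

namespace IsGroundState

lemma isRadial (hu : IsGroundState N ω p u) : IsRadial u := by
  obtain ⟨U, -, -, hU⟩ := hu.radial
  intro x y hxy
  rw [hU, hU, hxy]

lemma lt_of_norm_lt (hu : IsGroundState N ω p u) {x y : EuclideanSpace ℝ (Fin N)}
    (hxy : ‖x‖ < ‖y‖) : u y < u x := by
  obtain ⟨U, hanti, -, hU⟩ := hu.radial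
  rw [hU, hU]
  exact hanti (norm_nonneg x) (norm_nonneg y) hxy

lemma le_apply_zero (hu : IsGroundState N ω p u) (x : EuclideanSpace ℝ (Fin N)) : u x ≤ u 0 := by
  rcases eq_or_ne x 0 with rfl | hx
  · rfl
  · exact (hu.lt_of_norm_lt (by simpa using hx)).le

lemma exists_norm_comp_le (hu : IsGroundState N ω p u) {φ : ℝ → ℝ} (hφ : Continuous φ) :
    ∃ K, ∀ x, ‖φ (u x)‖ ≤ K := by
  obtain ⟨K, hK⟩ := (isCompact_Icc (a := 0) (b := u 0)).exists_bound_of_continuousOn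
    hφ.continuousOn
  exact ⟨K, fun x => hK _ ⟨(hu.pos x).le, hu.le_apply_zero x⟩⟩

lemma differentiable (hu : IsGroundState N ω p u) : Differentiable ℝ u :=
  hu.smooth.differentiable (by simp)

lemma expDecay_iteratedFDeriv (hu : IsGroundState N ω p u) (k : ℕ) :
    ExpDecay (iteratedFDeriv ℝ k u) :=
  let ⟨C, _, δ, hδ, hC⟩ := hu.decay k
  ⟨C, δ, hδ, hC⟩

lemma expDecay (hu : IsGroundState N ω p u) : ExpDecay u :=
  (hu.expDecay_iteratedFDeriv 0).of_norm_le 1 fun x => by rw [norm_iteratedFDeriv_zero, one_mul]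

lemma expDecay_dirDeriv (hu : IsGroundState N ω p u) (e : EuclideanSpace ℝ (Fin N)) :
    ExpDecay (dirDeriv e u) :=
  (hu.expDecay_iteratedFDeriv 1).of_norm_le ‖e‖ fun x => by
    rw [norm_iteratedFDeriv_one, mul_comm]
    exact (fderiv ℝ u x).le_opNorm e

lemma expDecay_dirDeriv_dirDeriv (hu : IsGroundState N ω p u)
    (a b : EuclideanSpace ℝ (Fin N)) : ExpDecay (dirDeriv a (dirDeriv b u)) :=
  (hu.expDecay_iteratedFDeriv 2).of_norm_le (‖a‖ * ‖b‖) fun x => by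
    rw [dirDeriv_dirDeriv hu.smooth, mul_comm]
    simpa [iteratedFDeriv_two_apply, Fin.prod_univ_two] using
      (iteratedFDeriv ℝ 2 u x).le_opNorm ![a, b]

lemma contDiff_dualWeight_comp (hu : IsGroundState N ω p u) :
    ContDiff ℝ (⊤ : ℕ∞) fun x => dualWeight (u x) :=
  contDiff_dualWeight.comp hu.smooth

lemma contDiff_dualProfile (hu : IsGroundState N ω p u) : ContDiff ℝ (⊤ : ℕ∞) (dualProfile u) :=
  contDiff_dualMap.comp hu.smooth

lemma differentiable_dualProfile (hu : IsGroundState N ω p u) : Differentiable ℝ (dualProfile u) :=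
  hu.contDiff_dualProfile.differentiable (by simp)

lemma isRadial_dualProfile (hu : IsGroundState N ω p u) : IsRadial (dualProfile u) :=
  fun _ _ hxy => congrArg dualMap (hu.isRadial hxy)

lemma exists_norm_dualWeight_comp_le (hu : IsGroundState N ω p u) :
    ∃ K, ∀ x, ‖dualWeight (u x)‖ ≤ K :=
  hu.exists_norm_comp_le (contDiff_dualWeight.continuous (n := 0))

lemma expDecay_dirDeriv_dualWeight_comp (hu : IsGroundState N ω p u)
    (e : EuclideanSpace ℝ (Fin N)) : ExpDecay (dirDeriv e fun x => dualWeight (u x)) := by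
  have hcont : Continuous fun t => 2 * t / dualWeight t :=
    continuous_iff_continuousAt.2 fun t => (hasDerivAt_dualWeight_deriv t).continuousAt
  obtain ⟨K, hK⟩ := hu.exists_norm_comp_le hcont
  rw [dirDeriv_dualWeight_comp hu.differentiable]
  exact (hu.expDecay_dirDeriv e).mul_of_norm_le hK

lemma expDecay_dualProfile (hu : IsGroundState N ω p u) : ExpDecay (dualProfile u) := by
  obtain ⟨K, hK⟩ := hu.exists_norm_dualWeight_comp_le
  refine (hu.expDecay.mul_of_norm_le hK).of_norm_le 1 fun x => ?_
  have hpos := hu.pos x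
  rw [one_mul, dualProfile, Real.norm_of_nonneg (dualMap_pos hpos).le,
    Real.norm_of_nonneg (mul_nonneg (dualWeight_pos _).le hpos.le), mul_comm]
  exact dualMap_le hpos.le

lemma expDecay_dirDeriv_dualProfile (hu : IsGroundState N ω p u)
    (e : EuclideanSpace ℝ (Fin N)) : ExpDecay (dirDeriv e (dualProfile u)) := by
  obtain ⟨K, hK⟩ := hu.exists_norm_dualWeight_comp_le
  rw [dirDeriv_dualProfile hu.differentiable]
  exact (hu.expDecay_dirDeriv e).mul_of_norm_le hK

lemma expDecay_dirDeriv_dirDeriv_dualProfile (hu : IsGroundState N ω p u)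
    (a b : EuclideanSpace ℝ (Fin N)) : ExpDecay (dirDeriv a (dirDeriv b (dualProfile u))) := by
  obtain ⟨K, hK⟩ := hu.exists_norm_dualWeight_comp_le
  rw [dirDeriv_dualProfile hu.differentiable,
    dirDeriv_mul (hu.contDiff_dualWeight_comp.differentiable (by simp))
      (differentiable_dirDeriv hu.smooth b)]
  exact ((hu.expDecay_dirDeriv_dirDeriv a b).mul_of_norm_le hK).add
    ((hu.expDecay_dirDeriv b).mul (hu.expDecay_dirDeriv_dualWeight_comp a))

lemma expDecay_dualForce_comp (hu : IsGroundState N ω p u) (hp : 1 ≤ p) :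
    ExpDecay fun x => dualForce ω p (u x) := by
  have hcont : Continuous fun t : ℝ => (t ^ (p - 1) - ω) / dualWeight t :=
    ((Real.continuous_rpow_const (by linarith)).sub continuous_const).div
      (contDiff_dualWeight.continuous (n := 0)) fun t => (dualWeight_pos t).ne'
  obtain ⟨K, hK⟩ := hu.exists_norm_comp_le hcont
  have heq : (fun x => dualForce ω p (u x)) =
      fun x => (u x ^ (p - 1) - ω) / dualWeight (u x) * u x := by
    funext x
    rw [dualForce_eq ω p (hu.pos x)]
    ring
  rw [heq]
  exact hu.expDecay.mul_of_norm_le hK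

lemma expDecay_dualEnergy_comp (hu : IsGroundState N ω p u) (hp : 0 ≤ p) :
    ExpDecay fun x => dualEnergy ω p (u x) := by
  have hcont : Continuous fun t : ℝ => t ^ p / (p + 1) - ω * t / 2 :=
    ((Real.continuous_rpow_const hp).div_const _).sub (by fun_prop)
  obtain ⟨K, hK⟩ := hu.exists_norm_comp_le hcont
  have heq : (fun x => dualEnergy ω p (u x)) =
      fun x => (u x ^ p / (p + 1) - ω * u x / 2) * u x := by
    funext x
    rw [dualEnergy, Real.rpow_add_one (hu.pos x).ne']
    ring
  rw [heq]
  exact hu.expDecay.mul_of_norm_le hK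

lemma lap_dualProfile (hu : IsGroundState N ω p u) (x : EuclideanSpace ℝ (Fin N)) :
    lap (dualProfile u) x = -dualForce ω p (u x) := by
  have hsolves := hu.solves x
  rw [lap_sq hu.smooth] at hsolves
  change lap (fun y => dualMap (u y)) x = _
  rw [lap_comp hasDerivAt_dualMap hasDerivAt_dualWeight hu.smooth, dualForce]
  have hS := (dualWeight_pos (u x)).ne'
  field_simp
  rw [dualWeight_sq]
  linarith

lemma lap_dirDeriv_dualProfile (hu : IsGroundState N ω p u) (e x : EuclideanSpace ℝ (Fin N)) :
    lap (dirDeriv e (dualProfile u)) x =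
      -(dualPotential ω p (u x) * dirDeriv e (dualProfile u) x) := by
  have hlap : lap (dualProfile u) = fun x => -dualForce ω p (u x) := funext hu.lap_dualProfile
  rw [← dirDeriv_lap hu.contDiff_dualProfile, hlap, dirDeriv_dualProfile hu.differentiable,
    dirDeriv_comp (φ := fun t => -dualForce ω p t) (hasDerivAt_dualForce ω p (hu.pos x)).neg
      (hu.differentiable x)]
  ring

lemma Lplus_eq (hu : IsGroundState N ω p u) (hv : ContDiff ℝ (⊤ : ℕ∞) v)
    (x : EuclideanSpace ℝ (Fin N)) :
    Lplus ω p u v x = -(dualWeight (u x) * (lap (fun y => dualWeight (u y) * v y) x +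
      dualPotential ω p (u x) * (dualWeight (u x) * v x))) := by
  have hsolves := hu.solves x
  have hcross : ∑ i, pd i (fun y => dualWeight (u y)) x * pd i v x =
      2 * u x / dualWeight (u x) * ∑ i, pd i u x * pd i v x := by
    simp only [Finset.mul_sum, pd_eq_dirDeriv, dirDeriv_dualWeight_comp hu.differentiable,
      mul_assoc]
  rw [lap_sq hu.smooth] at hsolves
  rw [Lplus, lap_sq hu.smooth, lap_mul hu.smooth hv, lap_mul hu.contDiff_dualWeight_comp hv, hcross,
    lap_comp hasDerivAt_dualWeight hasDerivAt_dualWeight_deriv hu.smooth, dualPotential]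
  have hS := (dualWeight_pos (u x)).ne'
  have hpow : u x ^ p = ω * u x - lap u x * dualWeight (u x) ^ 2 - 2 * u x * gradsq u x := by
    rw [dualWeight_sq]; linarith
  rw [hpow]
  field_simp
  linear_combination (lap v x * dualWeight (u x) ^ 2 - 2 * v x * gradsq u x) *
    dualWeight_sq (u x)

lemma memH1_dirDeriv_dualProfile (hu : IsGroundState N ω p u)
    (e : EuclideanSpace ℝ (Fin N)) : MemH1 (dirDeriv e (dualProfile u)) where
  memLp := (hu.expDecay_dirDeriv_dualProfile e).memLp_two
    (continuous_dirDeriv hu.contDiff_dualProfile e)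
  memLp_pd _ := (hu.expDecay_dirDeriv_dirDeriv_dualProfile _ e).memLp_two
    (continuous_dirDeriv (contDiff_dirDeriv hu.contDiff_dualProfile e) _)

lemma memH1_dualWeight_mul (hu : IsGroundState N ω p u) (hv : Differentiable ℝ v)
    (hH1 : MemH1 v) : MemH1 fun x => dualWeight (u x) * v x :=
  hH1.bdd_mul hv hu.contDiff_dualWeight_comp hu.exists_norm_dualWeight_comp_le
    fun _ => (hu.expDecay_dirDeriv_dualWeight_comp _).exists_norm_le

end IsGroundState

end DualProfile

/-! ### The radial dual profile -/

section RadialFlux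

open scoped ContDiff

variable {n : ℕ} {f : EuclideanSpace ℝ (Fin (n + 1)) → ℝ} {t : ℝ}

/-- The flux `t ^ n ∂ᵣf` of the gradient of a radial function `f` of `n + 1` variables through the
sphere of radius `t`, up to the area of the unit sphere. -/
def radialFlux (f : EuclideanSpace ℝ (Fin (n + 1)) → ℝ) (t : ℝ) : ℝ :=
  t ^ n * dirDeriv (axis n) f (t • axis n)

lemma continuous_radialFlux (hf : ContDiff ℝ ∞ f) : Continuous (radialFlux f) := by
  have := continuous_dirDeriv hf (axis n)
  unfold radialFlux
  fun_prop

lemma IsRadial.radialFlux_zero (hr : IsRadial f) (hf : Differentiable ℝ f) :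
    radialFlux f 0 = 0 := by
  rw [radialFlux, zero_smul, hr.dirDeriv_zero hf, mul_zero]

lemma IsRadial.hasDerivAt_dirDeriv_axis (hr : IsRadial f) (hf : ContDiff ℝ ∞ f) (ht : 0 < t) :
    HasDerivAt (fun t : ℝ => dirDeriv (axis n) f (t • axis n))
      (-(n / t * dirDeriv (axis n) f (t • axis n)) + lap f (t • axis n)) t :=
  hr.dirDeriv_dirDeriv_axis hf ht ▸
    hasDerivAt_comp_ray (differentiable_dirDeriv hf (axis n)) (axis n) t

lemma IsRadial.hasDerivAt_radialFlux (hr : IsRadial f) (hf : ContDiff ℝ ∞ f) (ht : 0 < t) :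
    HasDerivAt (radialFlux f) (t ^ n * lap f (t • axis n)) t := by
  refine ((hasDerivAt_pow n t).mul (hr.hasDerivAt_dirDeriv_axis hf ht)).congr_deriv ?_
  have hpow : (n : ℝ) * t ^ (n - 1) = n / t * t ^ n := by
    cases n with
    | zero => simp
    | succ k => rw [Nat.add_sub_cancel, pow_succ]; field_simp
  rw [hpow]
  ring

end RadialFlux

namespace IsGroundState

variable {n : ℕ} {ω p b s t : ℝ} {u : EuclideanSpace ℝ (Fin (n + 1)) → ℝ}

lemma axis_lt (hu : IsGroundState (n + 1) ω p u) (hs : 0 ≤ s) (hst : s < t) :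
    u (t • axis n) < u (s • axis n) := by
  refine hu.lt_of_norm_lt ?_
  rwa [norm_smul_axis, norm_smul_axis, Real.norm_of_nonneg hs,
    Real.norm_of_nonneg (hs.trans hst.le)]

lemma axis_rpow_lt (hu : IsGroundState (n + 1) ω p u) (hp : 1 < p) (hs : 0 ≤ s) (hst : s < t) :
    u (t • axis n) ^ (p - 1) < u (s • axis n) ^ (p - 1) :=
  Real.rpow_lt_rpow (hu.pos _).le (hu.axis_lt hs hst) (sub_pos.2 hp)

lemma hasDerivAt_radialFlux_dualProfile (hu : IsGroundState (n + 1) ω p u) (ht : 0 < t) :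
    HasDerivAt (radialFlux (dualProfile u)) (t ^ n * -dualForce ω p (u (t • axis n))) t :=
  hu.lap_dualProfile (t • axis n) ▸
    hu.isRadial_dualProfile.hasDerivAt_radialFlux hu.contDiff_dualProfile ht

lemma radialFlux_dualProfile_nonpos (hu : IsGroundState (n + 1) ω p u) (ht : 0 < t) :
    radialFlux (dualProfile u) t ≤ 0 := by
  have hanti : AntitoneOn (fun t : ℝ => dualProfile u (t • axis n)) (Set.Ici 0) :=
    StrictAntiOn.antitoneOn fun s hs r _ hsr => dualMap_strictMono (hu.axis_lt hs hsr)
  have hderiv := hasDerivAt_comp_ray hu.differentiable_dualProfile (axis n) t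
  refine mul_nonpos_of_nonneg_of_nonpos (by positivity) ?_
  rw [← hderiv.deriv, ← derivWithin_of_mem_nhds (Ici_mem_nhds ht)]
  exact hanti.derivWithin_nonpos

lemma radialFlux_dualProfile_neg_of_le (hu : IsGroundState (n + 1) ω p u) (hp : 1 < p)
    (ht : 0 ≤ t) (hle : u (t • axis n) ^ (p - 1) ≤ ω) : radialFlux (dualProfile u) t < 0 := by
  have hmono : StrictMonoOn (radialFlux (dualProfile u)) (Set.Ici t) := by
    refine strictMonoOn_of_deriv_pos (convex_Ici t)
      (continuous_radialFlux hu.contDiff_dualProfile).continuousOn fun r hr => ?_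
    rw [interior_Ici] at hr
    have hr₀ : 0 < r := ht.trans_lt hr
    rw [(hu.hasDerivAt_radialFlux_dualProfile hr₀).deriv]
    exact mul_pos (pow_pos hr₀ n)
      (neg_pos.2 ((dualForce_neg_iff (hu.pos _)).2 ((hu.axis_rpow_lt hp ht hr).trans_le hle)))
  have hlt : t < t + 1 := lt_add_one t
  exact (hmono Set.self_mem_Ici hlt.le hlt).trans_le
    (hu.radialFlux_dualProfile_nonpos (ht.trans_lt hlt))

lemma radialFlux_dualProfile_neg_of_ge (hu : IsGroundState (n + 1) ω p u) (hp : 1 < p)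
    (ht : 0 < t) (hge : ω ≤ u (t • axis n) ^ (p - 1)) : radialFlux (dualProfile u) t < 0 := by
  have hanti : StrictAntiOn (radialFlux (dualProfile u)) (Set.Icc 0 t) := by
    refine strictAntiOn_of_deriv_neg (convex_Icc 0 t)
      (continuous_radialFlux hu.contDiff_dualProfile).continuousOn fun r hr => ?_
    rw [interior_Icc] at hr
    rw [(hu.hasDerivAt_radialFlux_dualProfile hr.1).deriv]
    exact mul_neg_of_pos_of_neg (pow_pos hr.1 n)
      (neg_lt_zero.2 ((dualForce_pos_iff (hu.pos _)).2
        (hge.trans_lt (hu.axis_rpow_lt hp hr.1.le hr.2))))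
  have hzero := hu.isRadial_dualProfile.radialFlux_zero hu.differentiable_dualProfile
  exact hzero ▸ hanti (Set.left_mem_Icc.2 ht.le) (Set.right_mem_Icc.2 ht.le) ht

lemma dirDeriv_axis_dualProfile_neg (hu : IsGroundState (n + 1) ω p u) (hp : 1 < p)
    (ht : 0 < t) : dirDeriv (axis n) (dualProfile u) (t • axis n) < 0 := by
  have hflux : radialFlux (dualProfile u) t < 0 :=
    (le_total (u (t • axis n) ^ (p - 1)) ω).elim (hu.radialFlux_dualProfile_neg_of_le hp ht.le)
      (hu.radialFlux_dualProfile_neg_of_ge hp ht)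
  exact neg_of_mul_neg_right hflux (pow_pos ht n).le

lemma lt_rpow_apply_zero (hu : IsGroundState (n + 1) ω p u) (hp : 1 < p) :
    ω < u 0 ^ (p - 1) := by
  by_contra! hle
  refine (hu.radialFlux_dualProfile_neg_of_le hp le_rfl (by rwa [zero_smul])).ne ?_
  exact hu.isRadial_dualProfile.radialFlux_zero hu.differentiable_dualProfile

lemma isNondegenerateRadial_dualProfile (hu : IsGroundState (n + 1) ω p u) (hp : 1 < p) :
    IsNondegenerateRadial (dualProfile u) where
  smooth := hu.contDiff_dualProfile
  radial := hu.isRadial_dualProfile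
  dirDeriv_self_ne_zero x hx := by
    rw [hu.isRadial_dualProfile.dirDeriv_self hu.differentiable_dualProfile norm_axis]
    exact mul_ne_zero (norm_ne_zero_iff.2 hx)
      (hu.dirDeriv_axis_dualProfile_neg hp (norm_pos_iff.2 hx)).ne
  dirDeriv_dirDeriv_zero_ne_zero e he hzero := by
    have hlap := hu.isRadial_dualProfile.lap_zero hu.contDiff_dualProfile he
    rw [hzero, mul_zero, hu.lap_dualProfile, neg_eq_zero] at hlap
    exact ((dualForce_pos_iff (hu.pos 0)).2 (hu.lt_rpow_apply_zero hp)).ne' hlap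

lemma exists_axis_rpow_eq (hu : IsGroundState (n + 1) ω p u) (hω : 0 < ω) (hp : 1 < p) :
    ∃ b : ℝ, 0 ≤ b ∧ u (b • axis n) ^ (p - 1) = ω := by
  have hcont : Continuous fun t : ℝ => u (t • axis n) ^ (p - 1) := by
    have := hu.smooth.continuous
    exact (Real.continuous_rpow_const (sub_pos.2 hp).le).comp (by fun_prop)
  have hlim : Tendsto (fun t : ℝ => u (t • axis n) ^ (p - 1)) atTop (𝓝 0) := by
    simpa [Real.zero_rpow (sub_pos.2 hp).ne'] using
      (hu.expDecay.comp_of_norm_eq norm_smul_axis).tendsto_atTop.rpow_const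
        (Or.inr (sub_pos.2 hp).le)
  obtain ⟨R, hRω, hR⟩ := ((hlim.eventually_lt_const hω).and (eventually_ge_atTop 0)).exists
  obtain ⟨b, hb, hbω⟩ := intermediate_value_Icc' hR hcont.continuousOn
    ⟨hRω.le, by rw [zero_smul]; exact (hu.lt_rpow_apply_zero hp).le⟩
  exact ⟨b, hb.1, hbω⟩

/-- The dual profile of a ground state as a function of the radius. -/
def radialProfile (hu : IsGroundState (n + 1) ω p u) (hω : 0 < ω) (hp : 1 < p) (hb₀ : 0 ≤ b)
    (hb : u (b • axis n) ^ (p - 1) = ω) : RadialProfile n where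
  w r := dualProfile u (r • axis n)
  w' r := dirDeriv (axis n) (dualProfile u) (r • axis n)
  w'' r := dirDeriv (axis n) (dirDeriv (axis n) (dualProfile u)) (r • axis n)
  f r := dualForce ω p (u (r • axis n))
  V r := dualPotential ω p (u (r • axis n))
  F r := dualEnergy ω p (u (r • axis n))
  b := b
  hasDerivAt_w := hasDerivAt_comp_ray hu.differentiable_dualProfile (axis n)
  hasDerivAt_w' := hasDerivAt_comp_ray (differentiable_dirDeriv hu.contDiff_dualProfile _) (axis n)
  hasDerivAt_f r := by
    rw [dirDeriv_dualProfile hu.differentiable, ← mul_assoc]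
    exact (hasDerivAt_dualForce ω p (hu.pos _)).comp r (hasDerivAt_comp_ray hu.differentiable _ r)
  hasDerivAt_F r := by
    rw [dirDeriv_dualProfile hu.differentiable, ← mul_assoc]
    exact (hasDerivAt_dualEnergy (p := p) ω (by linarith) (hu.pos _)).comp r
      (hasDerivAt_comp_ray hu.differentiable _ r)
  continuous_w'' := (continuous_dirDeriv (contDiff_dirDeriv hu.contDiff_dualProfile _) _).comp
    (by fun_prop)
  ode hr := by
    rw [hu.isRadial_dualProfile.dirDeriv_dirDeriv_axis hu.contDiff_dualProfile hr,
      hu.lap_dualProfile, sub_eq_add_neg]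
  w'_zero := by rw [zero_smul, hu.isRadial_dualProfile.dirDeriv_zero hu.differentiable_dualProfile]
  w_pos r := dualMap_pos (hu.pos _)
  w'_neg := hu.dirDeriv_axis_dualProfile_neg hp
  decay_w := hu.expDecay_dualProfile.comp_of_norm_eq norm_smul_axis
  decay_w' := (hu.expDecay_dirDeriv_dualProfile _).comp_of_norm_eq norm_smul_axis
  decay_w'' := (hu.expDecay_dirDeriv_dirDeriv_dualProfile _ _).comp_of_norm_eq norm_smul_axis
  decay_f := (hu.expDecay_dualForce_comp hp.le).comp_of_norm_eq norm_smul_axis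
  decay_F := (hu.expDecay_dualEnergy_comp (by linarith)).comp_of_norm_eq norm_smul_axis
  exists_abs_V_le :=
    let ⟨M, hM⟩ := hu.exists_norm_comp_le (continuous_dualPotential ω hp.le)
    ⟨M, fun _ => hM _⟩
  f_pos hr hrb := (dualForce_pos_iff (hu.pos _)).2 (hb.symm.trans_lt (hu.axis_rpow_lt hp hr.le hrb))
  f_b := by rw [dualForce_eq ω p (hu.pos _), hb, sub_self, mul_zero]
  f_neg hbr := (dualForce_neg_iff (hu.pos _)).2 ((hu.axis_rpow_lt hp hb₀ hbr).trans_eq hb)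
  excess_pos_of_le hbr := dualExcess_pos hp (hu.pos _) <| hbr.eq_or_lt.elim
    (fun h => h ▸ hb.le) fun h => ((hu.axis_rpow_lt hp hb₀ h).trans_eq hb).le
  excess_mul_lt h₁ h₁₀ h₀ := dualExcess_mul_dualForce_lt hω hp (hu.pos _)
    (hb.symm.trans_lt (hu.axis_rpow_lt hp (h₁.trans h₁₀).le h₀)) (hu.axis_lt h₁.le h₁₀)
  pohozaev_nonneg_of_le {r₁ r₀} hn h₁ h₁₀ h := by
    have hle : u (r₀ • axis n) ≤ u (r₁ • axis n) :=
      h₁₀.eq_or_lt.elim (fun h => h ▸ le_rfl) fun h => (hu.axis_lt h₁.le h).le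
    have hdim : (n : ℝ) - 1 = n + 1 - 2 := by ring
    rw [hdim] at h ⊢
    have hn' : (1 : ℝ) ≤ n := by exact_mod_cast hn
    exact pohozaevDensity_nonneg_of_le (by linarith) hω hp (hu.pos _) hle h

variable {Z : EuclideanSpace ℝ (Fin (n + 1)) → ℝ}

lemma eq_zero_of_isRadial (hu : IsGroundState (n + 1) ω p u) (hω : 0 < ω) (hp : 1 < p)
    (hZ : ContDiff ℝ (⊤ : ℕ∞) Z) (hr : IsRadial Z) (hH1 : MemH1 Z)
    (hlap : ∀ x, lap Z x = -(dualPotential ω p (u x) * Z x))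
    (x : EuclideanSpace ℝ (Fin (n + 1))) : Z x = 0 := by
  obtain ⟨b, hb₀, hb⟩ := hu.exists_axis_rpow_eq hω hp
  have hZ' := hZ.differentiable (by simp)
  have hkernel : IsRadialKernel n (hu.radialProfile hω hp hb₀ hb).V (fun r => Z (r • axis n))
      (fun r => dirDeriv (axis n) Z (r • axis n)) :=
    { solves := fun r hr₀ => ⟨hasDerivAt_comp_ray hZ' (axis n) r,
        (hr.hasDerivAt_dirDeriv_axis hZ hr₀).congr_deriv <| by
          rw [hlap, Pi.zero_apply, zero_sub, ← sub_eq_add_neg]; rfl⟩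
      continuous := hZ.continuous.comp (by fun_prop)
      continuous_deriv := (continuous_dirDeriv hZ _).comp (by fun_prop)
      deriv_zero := by rw [zero_smul, hr.dirDeriv_zero hZ']
      integrable := hr.integrableOn_Ioi hZ hH1 }
  rw [hr.eq_axis x]
  exact RadialProfile.kernel_eq_zero hkernel (norm_nonneg x)

theorem exists_eq_dirDeriv_dualProfile (hu : IsGroundState (n + 1) ω p u) (hω : 0 < ω)
    (hp : 1 < p) (hZ : ContDiff ℝ (⊤ : ℕ∞) Z) (hH1 : MemH1 Z)
    (hlap : ∀ x, lap Z x = -(dualPotential ω p (u x) * Z x)) :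
    ∃ b, ∀ x, Z x = dirDeriv b (dualProfile u) x := by
  have hV : IsRadial fun x => dualPotential ω p (u x) :=
    fun _ _ hxy => congrArg (dualPotential ω p) (hu.isRadial hxy)
  obtain ⟨b, hb⟩ := (hu.isNondegenerateRadial_dualProfile hp).exists_isRadial_sub_dirDeriv
    hu.lap_dirDeriv_dualProfile hV hZ hlap hH1.memLp
  have hw := contDiff_dirDeriv hu.contDiff_dualProfile b
  refine ⟨b, fun x => sub_eq_zero.1 (hu.eq_zero_of_isRadial hω hp (hZ.sub hw) hb ?_ ?_ x)⟩
  · exact hH1.sub (hu.memH1_dirDeriv_dualProfile b) (hZ.differentiable (by simp))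
      (hw.differentiable (by simp))
  · intro y
    rw [lap_sub hZ hw, hlap, hu.lap_dirDeriv_dualProfile]
    ring

end IsGroundState

/-- The real kernel of `L₊` is spanned by the partial derivatives of `u`. -/
theorem stmt1 (N : ℕ) (hN : 1 ≤ N) (ω p : ℝ) (hω : 0 < ω) (hp : 1 < p)
    (hpmax : 3 ≤ N → p < (3 * (N : ℝ) + 2) / ((N : ℝ) - 2))
    (u : EuclideanSpace ℝ (Fin N) → ℝ) (hu : IsGroundState N ω p u)
    (v : EuclideanSpace ℝ (Fin N) → ℝ) (hv : ContDiff ℝ (⊤ : ℕ∞) v)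
    (hint : Integrable (fun x => (v x) ^ 2 + gradsq v x))
    (heq : ∀ x, Lplus ω p u v x = 0) :
    ∃ c : Fin N → ℝ, ∀ x, v x = ∑ l : Fin N, c l * pd l u x := by
  obtain ⟨n, rfl⟩ := Nat.exists_eq_add_of_le' hN
  have hlap (x : EuclideanSpace ℝ (Fin (n + 1))) : lap (fun y => dualWeight (u y) * v y) x =
      -(dualPotential ω p (u x) * (dualWeight (u x) * v x)) := by
    have hker := heq x
    rw [hu.Lplus_eq hv, neg_eq_zero, mul_eq_zero] at hker
    exact eq_neg_of_add_eq_zero_left (hker.resolve_left (dualWeight_pos _).ne')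
  obtain ⟨b, hb⟩ := hu.exists_eq_dirDeriv_dualProfile hω hp (hu.contDiff_dualWeight_comp.mul hv)
    (hu.memH1_dualWeight_mul (hv.differentiable (by simp)) (.of_integrable hv hint)) hlap
  refine ⟨b, fun x => ?_⟩
  rw [← dirDeriv_eq_sum_pd]
  have hx := hb x
  rw [dirDeriv_dualProfile hu.differentiable] at hx
  exact mul_left_cancel₀ (dualWeight_pos (u x)).ne' hx

end
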